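/- arXiv:1808.01268 — 2 statements merged into one kernel-verified Lean document; each statement's English description precedes it below -/
import Mathlib

section
/- Let c be a Coxeter element of G5 and let k ≥ 2. Two reflection factorizations (t₁,…,t_k) and (t′₁,…,t′_k) of c lie in the same Hurwitz orbit if and only if they have the same multiset of conjugacy classes. -/
noncomputable section

open Matrix Complex

/-- The `i`-th Hurwitz move on length-`k` tuples of group elements. -/
def IsHurwitzMove {G : Type*} [Group G] {k : ℕ} (t t' : Fin k → G) : Prop :=
  ∃ i : ℕ, ∃ h : i + 1 < k,
    t' ⟨i, Nat.lt_of_succ_lt h⟩ = t ⟨i + 1, h⟩ ∧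
    t' ⟨i + 1, h⟩ = (t ⟨i + 1, h⟩)⁻¹ * t ⟨i, Nat.lt_of_succ_lt h⟩ * t ⟨i + 1, h⟩ ∧
    ∀ j : Fin k, (j : ℕ) ≠ i → (j : ℕ) ≠ i + 1 → t' j = t j

/-- Two tuples lie in the same Hurwitz orbit. -/
def SameHurwitzOrbit {G : Type*} [Group G] {k : ℕ} (t t' : Fin k → G) : Prop :=
  Relation.EqvGen IsHurwitzMove t t'

/-- A group element `r` appears (as an entry) in the Hurwitz orbit of the tuple `t`. -/
def Appears {G : Type*} [Group G] {k : ℕ} (r : G) (t : Fin k → G) : Prop :=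
  ∃ s : Fin k → G, SameHurwitzOrbit t s ∧ ∃ j, s j = r

/-- A tuple has two consecutive equal entries. -/
def HasConsecutiveEqualPair {G : Type*} [Group G] {k : ℕ} (t : Fin k → G) : Prop :=
  ∃ i : ℕ, ∃ h : i + 1 < k, t ⟨i, Nat.lt_of_succ_lt h⟩ = t ⟨i + 1, h⟩

/-- Replace the `p`-th entry of a tuple by two consecutive copies of its square. -/
def doubleAt {G : Type*} [Group G] {m : ℕ} (t : Fin m → G) (p : Fin m) : Fin (m + 1) → G :=
  fun j =>
    if h1 : (j : ℕ) < (p : ℕ) then t ⟨j, h1.trans p.isLt⟩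
    else if h2 : (j : ℕ) ≤ (p : ℕ) + 1 then (t p) ^ 2
    else t ⟨(j : ℕ) - 1, by have := j.isLt; omega⟩

/-- `ω = e^(2πi/3)`. -/
def ω : ℂ := Complex.exp (2 * Real.pi * Complex.I / 3)

def AMat : Matrix (Fin 2) (Fin 2) ℂ := !![1, 0; 0, ω]

def BMat : Matrix (Fin 2) (Fin 2) ℂ :=
  !![(ω - ω ^ 2) / 3, ω ^ 2; (-2 * ω ^ 2) / 3, (-ω - 2 * ω ^ 2) / 3]

/-- The complex reflection group G₄ as the subgroup of GL(2,ℂ) generated by `AMat`, `BMat`. -/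
def G4 : Subgroup (GL (Fin 2) ℂ) :=
  Subgroup.closure {g : GL (Fin 2) ℂ |
    (g : Matrix (Fin 2) (Fin 2) ℂ) = AMat ∨ (g : Matrix (Fin 2) (Fin 2) ℂ) = BMat}

/-- The matrix underlying an element of G₄. -/
def mat (t : G4) : Matrix (Fin 2) (Fin 2) ℂ := ((t : GL (Fin 2) ℂ) : Matrix (Fin 2) (Fin 2) ℂ)

/-- A reflection in G₄: a non-identity element with eigenvalue 1. -/
def IsReflection (t : G4) : Prop := t ≠ 1 ∧ (mat t - 1).det = 0

/-- The conjugacy class R₁ of reflections of determinant ω. -/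
def R1 : Set G4 := {t | IsReflection t ∧ (mat t).det = ω}

/-- The conjugacy class R₂ of reflections of determinant ω². -/
def R2 : Set G4 := {t | IsReflection t ∧ (mat t).det = ω ^ 2}

/-- A Coxeter element of G₄: an element with a primitive 6th root of unity as eigenvalue. -/
def IsCoxeter (c : G4) : Prop :=
  ∃ ζ : ℂ, IsPrimitiveRoot ζ 6 ∧ (mat c - ζ • (1 : Matrix (Fin 2) (Fin 2) ℂ)).det = 0

/-- The relators of G₅: a³, b³, abab(baba)⁻¹. -/
def g5Rels : Set (FreeGroup (Fin 2)) :=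
  {FreeGroup.of 0 ^ 3, FreeGroup.of 1 ^ 3,
    FreeGroup.of 0 * FreeGroup.of 1 * FreeGroup.of 0 * FreeGroup.of 1 *
      (FreeGroup.of 1 * FreeGroup.of 0 * FreeGroup.of 1 * FreeGroup.of 0)⁻¹}

/-- The complex reflection group G₅, by its presentation ⟨a,b | a³ = b³ = 1, abab = baba⟩. -/
abbrev G5 := PresentedGroup g5Rels

def ga : G5 := PresentedGroup.of 0
def gb : G5 := PresentedGroup.of 1

/-- The conjugacy class of `a` in G₅. -/
def S1 : Set G5 := {t | IsConj ga t}
/-- The conjugacy class of `b` in G₅. -/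
def S2 : Set G5 := {t | IsConj gb t}
/-- The conjugacy class of `a²` in G₅. -/
def S3 : Set G5 := {t | IsConj (ga ^ 2) t}
/-- The conjugacy class of `b²` in G₅. -/
def S4 : Set G5 := {t | IsConj (gb ^ 2) t}

/-- A reflection in G₅: a conjugate of a, b, a², or b². -/
def IsReflection5 (t : G5) : Prop := t ∈ S1 ∨ t ∈ S2 ∨ t ∈ S3 ∨ t ∈ S4

/-- A Coxeter element of G₅: an element of order 12. -/
def IsCoxeter5 (c : G5) : Prop := orderOf c = 12

/-! ### Words in sixteen letters and the quandle relation -/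

def cjTab : ℕ :=
  0xfcedfdcefdcefceddecfcefdcefddecfcfdeecdfecdfcfdeedfcdfecdfecedfcb8a9b98ab98ab8a99a8b8ab98ab99a8b8b9aa89ba89b8b9aa9b89ba89ba8a9b874657546754674655647467546755647475664576457475665745764576465743021310231023021120302310231120303122013201303122130132013202130

/-- Conjugation table: letter `x` conjugated by letter `y`. -/
def cj (x y : ℕ) : ℕ :=
  Nat.mod (Nat.shiftRight cjTab (Nat.mul 4 (Nat.add (Nat.mul 16 x) y))) 16

theorem cj_lt (x y : ℕ) : cj x y < 16 := Nat.mod_lt _ (by norm_num)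

theorem cj_cls : ∀ x < 16, ∀ y < 16, cj x y / 4 = x / 4 := by decide +kernel

theorem cj_inv : ∀ x < 16, ∀ y < 16, cj (cj (cj x y) y) y = x := by decide +kernel

theorem cj_inv8 : ∀ x < 16, ∀ y < 16, cj (cj x y) ((y + 8) % 16) = x := by decide +kernel

theorem cj_add8 : ∀ x < 16, ∀ y < 16, cj ((x + 8) % 16) y = (cj x y + 8) % 16 := by
  decide +kernel

theorem cj_self : ∀ x < 16, cj x x = x := by decide +kernel

def WW (w : List ℕ) : Prop := ∀ x ∈ w, x < 16

theorem WW_append {u v : List ℕ} : WW (u ++ v) ↔ WW u ∧ WW v := by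
  simp only [WW, List.mem_append]
  constructor
  · intro h
    exact ⟨fun x hx => h x (Or.inl hx), fun x hx => h x (Or.inr hx)⟩
  · rintro ⟨h1, h2⟩ x (hx | hx)
    exacts [h1 x hx, h2 x hx]

theorem WW_cons {x : ℕ} {v : List ℕ} : WW (x :: v) ↔ x < 16 ∧ WW v := by
  simp [WW]

theorem WW_nil : WW [] := by simp [WW]

inductive QQ : List ℕ → List ℕ → Prop
  | move (p : List ℕ) (x y : ℕ) (q : List ℕ) (hx : x < 16) (hy : y < 16) :
      QQ (p ++ x :: y :: q) (p ++ y :: cj x y :: q)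
  | refl (w : List ℕ) : QQ w w
  | symm {u v : List ℕ} : QQ u v → QQ v u
  | trans {u v w : List ℕ} : QQ u v → QQ v w → QQ u w

theorem QQ.app_left (p : List ℕ) {u v : List ℕ} (h : QQ u v) : QQ (p ++ u) (p ++ v) := by
  induction h with
  | move p' x y q hx hy =>
    have := QQ.move (p ++ p') x y q hx hy
    simpa [List.append_assoc] using this
  | refl => exact QQ.refl _
  | symm _ ih => exact ih.symm
  | trans _ _ ih1 ih2 => exact ih1.trans ih2

theorem QQ.app_right (q : List ℕ) {u v : List ℕ} (h : QQ u v) : QQ (u ++ q) (v ++ q) := by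
  induction h with
  | move p' x y q' hx hy =>
    have := QQ.move p' x y (q' ++ q) hx hy
    simpa [List.append_assoc] using this
  | refl => exact QQ.refl _
  | symm _ ih => exact ih.symm
  | trans _ _ ih1 ih2 => exact ih1.trans ih2

theorem QQ.cons (x : ℕ) {u v : List ℕ} (h : QQ u v) : QQ (x :: u) (x :: v) :=
  h.app_left [x]

theorem QQ.app {u v u' v' : List ℕ} (h : QQ u v) (h' : QQ u' v') : QQ (u ++ u') (v ++ v') :=
  (h.app_right u').trans (h'.app_left v)

theorem QQ.ww {u v : List ℕ} (h : QQ u v) : WW u ↔ WW v := by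
  induction h with
  | move p' x y q' hx hy =>
    simp only [WW_append, WW_cons, hx, hy, cj_lt, true_and]
  | refl => exact Iff.rfl
  | symm _ ih => exact ih.symm
  | trans _ _ ih1 ih2 => exact ih1.trans ih2

abbrev clsL (w : List ℕ) : List ℕ := w.map (fun x => x / 4)

theorem QQ.cls {u v : List ℕ} (h : QQ u v) : (clsL u).Perm (clsL v) := by
  induction h with
  | move p' x y q' hx hy =>
    simp only [clsL, List.map_append, List.map_cons, cj_cls x hx y hy]
    exact List.Perm.append_left _ (List.Perm.swap _ _ _)
  | refl => exact List.Perm.refl _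
  | symm _ ih => exact ih.symm
  | trans _ _ ih1 ih2 => exact ih1.trans ih2

theorem QQ.pull (x : ℕ) (hx : x < 16) (q : List ℕ) : ∀ p : List ℕ, WW p →
    QQ (p ++ x :: q) (x :: (p.map (fun y => cj y x) ++ q)) := by
  intro p
  induction p with
  | nil => intro _; exact QQ.refl _
  | cons y p ih =>
    intro h
    rw [WW_cons] at h
    refine ((ih h.2).cons y).trans ?_
    exact QQ.move [] y x _ h.1 hx

theorem QQ.push (q : List ℕ) : ∀ (c : List ℕ) (x : ℕ), x < 16 → WW c →
    QQ (x :: (c ++ q)) (c ++ (c.foldl cj x) :: q) := by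
  intro c
  induction c with
  | nil => intro x _ _; exact QQ.refl _
  | cons y c ih =>
    intro x hx h
    rw [WW_cons] at h
    refine (QQ.move [] x y (c ++ q) hx h.1).trans ?_
    exact (ih (cj x y) (cj_lt _ _) h.2).cons y

/-- The central words `l l l` and `l l⁻¹`. -/
def CC (k : Bool) (l : ℕ) : List ℕ := if k then [l, (l + 8) % 16] else [l, l, l]

theorem CC_ww (k : Bool) (l : ℕ) (hl : l < 16) : WW (CC k l) := by
  cases k <;> simp [CC, WW, hl, Nat.mod_lt]

theorem CC_ne (k : Bool) (l : ℕ) : 0 < (CC k l).length := by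
  cases k <;> simp [CC]

theorem CC_fold (k : Bool) (l x : ℕ) (hl : l < 16) (hx : x < 16) : (CC k l).foldl cj x = x := by
  cases k
  · simpa [CC] using cj_inv x hx l hl
  · simpa [CC] using cj_inv8 x hx l hl

theorem CC_map (k : Bool) (l x : ℕ) (hl : l < 16) (hx : x < 16) :
    (CC k l).map (fun y => cj y x) = CC k (cj l x) := by
  cases k
  · simp [CC]
  · simpa [CC] using cj_add8 l hl x hx

theorem CC_cls (k : Bool) (l l' : ℕ) (h : l < 16) (h' : l' < 16) (hh : l / 4 = l' / 4) :
    clsL (CC k l) = clsL (CC k l') := by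
  cases k
  · simp [CC, clsL, hh]
  · simp only [CC, clsL, if_true, List.map_cons, List.map_nil, hh]
    congr 2
    omega

theorem QQ.comm (k : Bool) (l : ℕ) (hl : l < 16) : ∀ u : List ℕ, WW u →
    QQ (CC k l ++ u) (u ++ CC k l) := by
  intro u
  induction u with
  | nil => intro _; simpa using QQ.refl _
  | cons x u ih =>
    intro h
    rw [WW_cons] at h
    have h1 := QQ.push u (CC k l) x h.1 (CC_ww k l hl)
    rw [CC_fold k l x hl h.1] at h1
    exact h1.symm.trans ((ih h.2).cons x)

theorem QQ.conjC (k : Bool) (l x : ℕ) (hl : l < 16) (u : List ℕ) (hu : WW u) (hx : x ∈ u) :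
    QQ (CC k l ++ u) (CC k (cj l x) ++ u) := by
  obtain ⟨p, q, rfl⟩ := List.append_of_mem hx
  have hw := hu
  rw [WW_append, WW_cons] at hu
  obtain ⟨hp, hx16, hq⟩ := hu
  have h1 := (QQ.comm k l hl p hp).app_right (x :: q)
  have h2 := (QQ.pull x hx16 q (CC k l) (CC_ww k l hl)).app_left p
  rw [CC_map k l x hl hx16] at h2
  have h3 := (QQ.comm k (cj l x) (cj_lt _ _) (p ++ [x])
    (by rw [WW_append, WW_cons]; exact ⟨hp, hx16, WW_nil⟩)).app_right q
  simp only [List.append_assoc, List.cons_append, List.nil_append] at h1 h2 h3 ⊢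
  exact h1.trans (h2.trans h3.symm)

def reachB (x y t t' : ℕ) : Bool :=
  [[], [x], [x, x], [y], [y, y], [x, y], [y, x], [x, x, y], [x, y, y], [y, y, x], [y, x, x],
    [x, x, y, y], [y, y, x, x]].any (fun s => s.foldl cj t == t')

theorem reach_all : ∀ x < 16, ∀ y < 16, x % 4 ≠ y % 4 → ∀ t < 16, ∀ j < 4,
    reachB x y t (t / 4 * 4 + j) = true := by decide +kernel

theorem QQ.foldC (k : Bool) (u : List ℕ) (hu : WW u) : ∀ (s : List ℕ), (∀ x ∈ s, x ∈ u) →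
    ∀ l < 16, QQ (CC k l ++ u) (CC k (s.foldl cj l) ++ u) := by
  intro s
  induction s with
  | nil => intro _ l _; exact QQ.refl _
  | cons x s ih =>
    intro h l hl
    refine (QQ.conjC k l x hl u hu (h x (by simp))).trans ?_
    exact ih (fun y hy => h y (by simp [hy])) (cj l x) (cj_lt _ _)

theorem QQ.transC (k : Bool) (u : List ℕ) (hu : WW u) (x y : ℕ) (hx : x ∈ u) (hy : y ∈ u)
    (hxy : x % 4 ≠ y % 4) (l l' : ℕ) (hl : l < 16) (hl' : l' < 16) (h : l / 4 = l' / 4) :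
    QQ (CC k l ++ u) (CC k l' ++ u) := by
  have h1 := reach_all x (hu x hx) y (hu y hy) hxy l hl (l' % 4) (Nat.mod_lt _ (by norm_num))
  have h2 : l / 4 * 4 + l' % 4 = l' := by omega
  rw [h2] at h1
  unfold reachB at h1
  rw [List.any_eq_true] at h1
  obtain ⟨s, hs, hs'⟩ := h1
  have hs'' : s.foldl cj l = l' := by simpa using hs'
  rw [← hs'']
  refine QQ.foldC k u hu s ?_ l hl
  intro z hz
  have : z = x ∨ z = y := by
    simp only [List.mem_cons, List.not_mem_nil, or_false] at hs
    rcases hs with rfl | rfl | rfl | rfl | rfl | rfl | rfl | rfl | rfl | rfl | rfl | rfl | rfl <;>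
      simp at hz <;> tauto
  rcases this with rfl | rfl
  · exact hx
  · exact hy

theorem QQ.extract : ∀ (cs w : List ℕ), WW w → cs.Subperm (clsL w) →
    ∃ u v, QQ w (u ++ v) ∧ clsL u = cs := by
  intro cs
  induction cs with
  | nil => intro w _ _; exact ⟨[], w, QQ.refl _, rfl⟩
  | cons c cs ih =>
    intro w hw h
    have hc : c ∈ clsL w := h.subset (by simp)
    obtain ⟨x, hx, hxc⟩ := List.mem_map.1 hc
    obtain ⟨p, q, rfl⟩ := List.append_of_mem hx
    have hw' := hw
    rw [WW_append, WW_cons] at hw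
    obtain ⟨hp, hx16, hq⟩ := hw
    have h1 := QQ.pull x hx16 q p hp
    have h2 := h1.ww.1 hw'
    rw [WW_cons] at h2
    have h3 : (c :: cs).Subperm (clsL (x :: (p.map (fun y => cj y x) ++ q))) :=
      h.trans h1.cls.subperm
    have h4 : clsL (x :: (p.map (fun y => cj y x) ++ q)) =
      c :: clsL (p.map (fun y => cj y x) ++ q) := by
      simp only [clsL, List.map_cons]
      rw [hxc]
    rw [h4, List.subperm_cons] at h3
    obtain ⟨u, v, huv, hu⟩ := ih _ h2.2 h3
    refine ⟨x :: u, v, h1.trans (huv.cons x), ?_⟩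
    simp only [clsL, List.map_cons] at hu ⊢
    rw [hu, hxc]

/-! ### Searching along fixed walks -/

def forceN (n : ℕ) (k : ℕ → Bool) : Bool :=
  match n with
  | 0 => k 0
  | m + 1 => k (m + 1)

theorem forceN_eq (n : ℕ) (k : ℕ → Bool) : forceN n k = k n := by
  cases n <;> rfl

def mvk : ℕ → List ℕ → (List ℕ → Bool) → Bool
  | 0, x :: y :: l, k => forceN (cj x y) fun z => k (y :: z :: l)
  | 1, x :: y :: l, k => forceN (cj (cj y x) x) fun z => k (z :: x :: l)
  | c + 2, x :: l, k => mvk c l (fun l' => k (x :: l'))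
  | _, _, _ => false

theorem mvk_sound : ∀ (c : ℕ) (w : List ℕ) (k : List ℕ → Bool), WW w → mvk c w k = true →
    ∃ w', QQ w w' ∧ k w' = true := by
  intro c w k
  fun_induction mvk c w k with
  | case1 x y l k =>
    intro hw h
    rw [forceN_eq] at h
    simp only [WW_cons] at hw
    exact ⟨_, QQ.move [] x y l hw.1 hw.2.1, h⟩
  | case2 x y l k =>
    intro hw h
    rw [forceN_eq] at h
    simp only [WW_cons] at hw
    refine ⟨_, ?_, h⟩
    have h1 := QQ.move [] (cj (cj y x) x) x l (cj_lt _ _) hw.1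
    rw [cj_inv y hw.2.1 x hw.1] at h1
    exact h1.symm
  | case3 c x l k ih =>
    intro hw h
    rw [WW_cons] at hw
    obtain ⟨w', h1, h2⟩ := ih hw.2 h
    exact ⟨x :: w', h1.cons x, h2⟩
  | case4 => intro _ h; simp at h

def walk (g : List ℕ → Bool) : List ℕ → List ℕ → Bool
  | [], w => g w
  | c :: cs, w => g w || mvk c w (walk g cs)

theorem walk_sound (g : List ℕ → Bool) : ∀ (cs w : List ℕ), WW w → walk g cs w = true →
    ∃ w', QQ w w' ∧ g w' = true := by
  intro cs
  induction cs with
  | nil => intro w _ h; exact ⟨w, QQ.refl _, h⟩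
  | cons c cs ih =>
    intro w hw h
    simp only [walk, Bool.or_eq_true] at h
    rcases h with h | h
    · exact ⟨w, QQ.refl _, h⟩
    · obtain ⟨w', h1, h2⟩ := mvk_sound _ _ _ hw h
      obtain ⟨w'', h3, h4⟩ := ih w' (h1.ww.1 hw) h2
      exact ⟨w'', h1.trans h3, h4⟩

/-- Representatives of Hurwitz orbits of words in one class. -/
def RSb (e : Bool) : ℕ → List (List ℕ)
  | 0 => [[]]
  | 1 => [[0], [1], [2], [3]]
  | 2 => [[0,0], [0,1], [0,2], [0,3], [1,1], bif e then [1,2] else [1,3], [2,2], [3,3]]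
  | 3 => [[0,0,0], [0,0,1], [0,0,2], [0,0,3], [0,1,1], bif e then [0,1,2] else [0,1,3],
      [0,2,2], [0,3,3], [1,1,1], [2,2,2], [3,3,3]]
  | 4 => [[0,0,0,0], [0,0,0,1], [0,0,0,2], [0,0,0,3], [0,0,1,1],
      bif e then [0,0,1,2] else [0,0,1,3], [0,0,2,2], [0,0,3,3], [0,1,1,1], [1,1,1,1],
      [2,2,2,2], [3,3,3,3]]
  | 5 => [[0,0,0,0,0], [0,0,0,0,1], [0,0,0,0,2], [0,0,0,0,3], [0,0,0,1,1],
      bif e then [0,0,0,1,2] else [0,0,0,1,3], [0,0,0,2,2], [0,0,0,3,3], [0,0,1,1,1],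
      [1,1,1,1,1], [2,2,2,2,2], [3,3,3,3,3]]
  | _ => []

def RS (i k : ℕ) : List (List ℕ) :=
  (RSb (Nat.beq i 0 || Nat.beq i 3) k).map (fun w => w.map (fun x => 4 * i + x))

def rsW : ℕ → List ℕ
  | 1 => [0, 0]
  | 2 => [0, 2, 2, 0, 0, 2, 0, 0]
  | 3 => [0, 2, 4, 4, 2, 2, 4, 0, 2, 5, 2, 0, 0, 5, 2, 2, 1, 0, 4, 3, 0, 4, 3, 4, 5, 3, 1, 2, 1, 4, 2]
  | 4 => [0, 2, 4, 6, 6, 4, 4, 6, 4, 4, 2, 4, 7, 4, 2, 1, 3, 5, 6, 6, 4, 2, 1, 2, 4, 7, 7, 5, 3, 0, 3, 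
    5, 7, 1, 3, 5, 2, 1, 2, 5, 6]
  | _ => []

theorem rs_chk : ∀ i < 4, ∀ k < 5, ∀ w ∈ RS i k, ∀ p < 4,
    walk (fun v => (RS i (k + 1)).contains v) (rsW k) ((4 * i + p) :: w) = true := by
  decide +kernel

theorem RS_ww : ∀ i < 4, ∀ k < 6, ∀ w ∈ RS i k, ∀ x ∈ w, x < 16 := by
  decide +kernel

theorem rs_ok (i : ℕ) (hi : i < 4) : ∀ (k : ℕ) (w : List ℕ), k < 6 →
    clsL w = List.replicate k i → ∃ v ∈ RS i k, QQ w v := by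
  intro k
  induction k with
  | zero =>
    intro w _ h
    have : w = [] := by simpa [clsL] using h
    subst this
    exact ⟨[], by simp [RS, RSb], QQ.refl _⟩
  | succ k ih =>
    intro w hk h
    cases w with
    | nil => simp [List.replicate_succ] at h
    | cons x w =>
      simp only [clsL, List.map_cons, List.replicate_succ, List.cons.injEq] at h
      obtain ⟨v, hv, hq⟩ := ih w (by omega) h.2
      have h1 := rs_chk i hi k (by omega) v hv (x % 4) (Nat.mod_lt _ (by norm_num))
      have h2 : 4 * i + x % 4 = x := by omega
      rw [h2] at h1
      have hw : WW (x :: v) := by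
        rw [WW_cons]
        exact ⟨by omega, RS_ww i hi k (by omega) v hv⟩
      obtain ⟨v', h3, h4⟩ := walk_sound _ _ _ hw h1
      refine ⟨v', by simpa using h4, (hq.cons x).trans h3⟩

def allR (n0 n1 n2 n3 : ℕ) (f : List ℕ → Bool) : Bool :=
  (RS 0 n0).all fun u0 => (RS 1 n1).all fun u1 => (RS 2 n2).all fun u2 => (RS 3 n3).all fun u3 =>
    f (u0 ++ (u1 ++ (u2 ++ u3)))

def csL (n0 n1 n2 n3 : ℕ) : List ℕ :=
  List.replicate n0 0 ++ (List.replicate n1 1 ++ (List.replicate n2 2 ++ List.replicate n3 3))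

theorem allR_sound (n0 n1 n2 n3 : ℕ) (h0 : n0 < 6) (h1 : n1 < 6) (h2 : n2 < 6) (h3 : n3 < 6)
    (f : List ℕ → Bool) (hf : allR n0 n1 n2 n3 f = true) (u : List ℕ)
    (hu : clsL u = csL n0 n1 n2 n3) : ∃ v, QQ u v ∧ f v = true ∧ WW v := by
  unfold csL clsL at hu
  obtain ⟨u0, t0, rfl, e0, hu⟩ := List.map_eq_append_iff.1 hu
  obtain ⟨u1, t1, rfl, e1, hu⟩ := List.map_eq_append_iff.1 hu
  obtain ⟨u2, u3, rfl, e2, e3⟩ := List.map_eq_append_iff.1 hu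
  obtain ⟨v0, m0, q0⟩ := rs_ok 0 (by norm_num) n0 u0 h0 e0
  obtain ⟨v1, m1, q1⟩ := rs_ok 1 (by norm_num) n1 u1 h1 e1
  obtain ⟨v2, m2, q2⟩ := rs_ok 2 (by norm_num) n2 u2 h2 e2
  obtain ⟨v3, m3, q3⟩ := rs_ok 3 (by norm_num) n3 u3 h3 e3
  refine ⟨v0 ++ (v1 ++ (v2 ++ v3)), q0.app (q1.app (q2.app q3)), ?_, ?_⟩
  · simp only [allR, List.all_eq_true] at hf
    exact hf v0 m0 v1 m1 v2 m2 v3 m3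
  · simp only [WW_append]
    exact ⟨RS_ww 0 (by norm_num) n0 h0 v0 m0, RS_ww 1 (by norm_num) n1 h1 v1 m1,
      RS_ww 2 (by norm_num) n2 h2 v2 m2, RS_ww 3 (by norm_num) n3 h3 v3 m3⟩

/-! ### Splitting off central words -/

def goalB (k : Bool) (i : ℕ) (w : List ℕ) : Bool :=
  bif k then (List.range 4).any (fun p => w.contains (4 * i + p) && w.contains ((4 * i + p + 8) % 16))
  else (List.range 4).any (fun p => Nat.ble 3 (w.count (4 * i + p)))

theorem pull_mem (l : ℕ) (hl : l < 16) (w : List ℕ) (hw : WW w) (h : l ∈ w) :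
    ∃ w', QQ w (l :: w') ∧ WW w' ∧ w.count l = w'.count l + 1 ∧
      ∀ m ∈ w, m ≠ l → cj m l = m → m ∈ w' := by
  obtain ⟨p, q, rfl⟩ := List.append_of_mem h
  have hw' := hw
  rw [WW_append, WW_cons] at hw
  have h1 := QQ.pull l hl q p hw.1
  refine ⟨_, h1, ?_, ?_, ?_⟩
  · have := h1.ww.1 hw'
    rw [WW_cons] at this
    exact this.2
  · have h2 : ∀ p : List ℕ, WW p → (p.map (fun y => cj y l)).count l = p.count l := by
      intro p
      induction p with
      | nil => intro _; rfl
      | cons y p ih =>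
        intro hp
        rw [WW_cons] at hp
        rw [List.map_cons, List.count_cons, List.count_cons, ih hp.2]
        congr 1
        have : cj y l = l ↔ y = l := by
          constructor
          · intro h
            have := cj_inv y hp.1 l hl
            rw [h, cj_self l hl, cj_self l hl] at this
            exact this.symm
          · rintro rfl
            exact cj_self _ hl
        simp [this]
    rw [List.count_append, List.count_append, List.count_cons, h2 p hw.1]
    simp
    omega
  · intro m hm hml hc
    simp only [List.mem_append, List.mem_cons, List.mem_map] at hm ⊢
    rcases hm with hm | hm | hm
    · exact Or.inl ⟨m, hm, hc⟩
    · exact absurd hm hml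
    · exact Or.inr hm

theorem cj_opp : ∀ l < 16, cj ((l + 8) % 16) l = (l + 8) % 16 := by decide +kernel

theorem goal_sound (k : Bool) (i : ℕ) (hi : i < 4) (w : List ℕ) (hw : WW w)
    (h : goalB k i w = true) : ∃ l < 16, l / 4 = i ∧ ∃ u, QQ w (CC k l ++ u) := by
  cases k
  · simp only [goalB, cond_false, List.any_eq_true, List.mem_range] at h
    obtain ⟨p, hp, h⟩ := h
    have h := Nat.le_of_ble_eq_true h
    have hl : 4 * i + p < 16 := by omega
    refine ⟨4 * i + p, hl, by omega, ?_⟩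
    generalize 4 * i + p = l at h hl
    obtain ⟨w1, q1, ww1, c1, -⟩ := pull_mem l hl w hw (List.count_pos_iff.1 (by omega))
    obtain ⟨w2, q2, ww2, c2, -⟩ := pull_mem l hl w1 ww1 (List.count_pos_iff.1 (by omega))
    obtain ⟨w3, q3, ww3, c3, -⟩ := pull_mem l hl w2 ww2 (List.count_pos_iff.1 (by omega))
    refine ⟨w3, ?_⟩
    exact q1.trans ((q2.trans (q3.cons l)).cons l)
  · simp only [goalB, cond_true, List.any_eq_true, List.mem_range, Bool.and_eq_true,
      List.contains_iff_mem] at h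
    obtain ⟨p, hp, h, h'⟩ := h
    have hl : 4 * i + p < 16 := by omega
    refine ⟨4 * i + p, hl, by omega, ?_⟩
    generalize 4 * i + p = l at h h' hl
    obtain ⟨w1, q1, ww1, -, c1⟩ := pull_mem l hl w hw h
    have hm := c1 _ h' (by omega) (cj_opp l hl)
    obtain ⟨w2, q2, -⟩ := pull_mem _ (Nat.mod_lt _ (by norm_num)) w1 ww1 hm
    exact ⟨w2, q1.trans (q2.cons l)⟩

/-! ### Product codes and the finite checks -/

def ptTab : ℕ :=
  0x98a063425710000098a405267130000098a576312400000098a7105362400000a981624530700000a982357041600000a986571423000000a9872403165000008a916245307000008a923570416000008a965714230000008a97240316500000a980634257100000a984052671300000a985763124000000a9871053624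

def pt (x p : ℕ) : ℕ :=
  Nat.mod (Nat.shiftRight ptTab (Nat.mul 4 (Nat.add (Nat.mul 16 x) p))) 16

def imgW (w : List ℕ) (p : ℕ) : ℕ := w.foldr pt p

def pcode (w : List ℕ) : ℕ := imgW w 0 + 16 * imgW w 1 + 256 * imgW w 8

def coxCodes : List ℕ :=
  [2337, 2593, 2309, 2565, 2356, 2612, 2375, 2631, 2403, 2659, 2422, 2678]

def coxB (w : List ℕ) : Bool := coxCodes.contains (pcode w)

def Alist : List (ℕ × ℕ × ℕ × ℕ × Bool × ℕ) :=
  [(0,1,0,3,true,1), (0,1,2,1,true,1), (0,2,1,1,true,1), (0,3,0,1,true,1), (1,0,1,2,true,0),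
   (1,0,3,0,true,0), (1,1,0,2,true,1), (1,1,2,0,true,0), (1,2,1,0,true,0), (2,0,1,1,true,0),
   (2,1,0,1,true,1), (3,0,1,0,true,0), (0,0,0,5,false,3), (0,0,2,3,false,3), (0,0,3,2,false,2),
   (0,0,5,0,false,2), (0,1,4,0,false,2), (0,2,3,0,false,2), (0,3,2,0,false,1), (0,4,1,0,false,1),
   (0,5,0,0,false,1), (1,0,0,4,false,3), (2,0,0,3,false,3), (2,3,0,0,false,1), (3,0,0,2,false,0),
   (3,2,0,0,false,0), (4,0,0,1,false,0), (5,0,0,0,false,0)]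

def Clist : List (ℕ × ℕ × ℕ × ℕ × Bool × ℕ) :=
  [(0,0,1,4,false,3), (0,0,4,1,false,2), (0,1,1,2,true,1), (1,0,2,1,true,0), (1,2,0,1,true,1),
   (1,4,0,0,false,1), (2,1,1,0,true,0), (4,1,0,0,false,0)]

def Blist : List (ℕ × ℕ × ℕ × ℕ × List (List ℕ)) :=
  [(0,0,1,1, [[8,13], [8,14], [8,15], [9,12], [9,14], [10,12]]),
   (1,1,0,0, [[0,5], [0,6], [0,7], [1,4], [1,7], [2,5]]),
   (0,1,2,0, [[4,8,9], [4,8,10], [4,8,11], [4,9,9], [4,10,10], [4,11,11]]),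
   (0,2,1,0, [[4,4,9], [4,4,10], [4,4,11], [4,5,9], [4,6,10], [4,7,11]]),
   (1,0,0,2, [[0,12,13], [0,12,14], [0,12,15], [0,13,13], [0,14,14], [0,15,15]]),
   (2,0,0,1, [[0,0,13], [0,0,14], [0,0,15], [0,1,13], [0,2,14], [0,3,15]]),
   (0,0,2,2, [[9,9,14,14], [10,10,12,12], [10,10,15,15], [11,11,12,12], [11,11,13,13],
     [11,11,14,14]]),
   (2,2,0,0, [[1,1,7,7], [2,2,5,5], [2,2,7,7], [3,3,4,4], [3,3,5,5], [3,3,6,6]])]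

def wkA : ℕ → List ℕ
  | 4 => [5, 3, 1, 1, 2, 4, 0, 3, 4, 1, 4, 4, 1, 4, 0, 2, 4, 0, 0, 4, 0, 0, 4, 2, 2, 1, 5, 5, 4, 2, 1, 3]
  | _ => [3, 1, 5, 0, 2, 6, 1, 3, 4, 1, 4, 7, 7, 2, 0, 4, 2, 7, 2, 2, 7, 4, 0, 0, 3, 5, 2, 1, 3, 4, 4, 
    6, 3, 0, 2, 6, 5, 6, 2, 5, 7, 5, 6, 0, 4, 3, 6, 3, 4, 0, 7, 5, 0, 6, 6, 0, 2, 5, 3, 3, 0, 0, 2, 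
    1, 2, 5, 2, 4, 0, 6, 4, 3, 0, 3, 5, 2, 1, 1, 2, 4, 2, 6, 2, 5]

def wkB : ℕ → List ℕ
  | 2 => [0, 0]
  | 3 => [1, 1, 2, 2, 0, 0, 2, 2, 1, 2, 2, 0, 0, 2, 2, 1, 1, 1, 3, 0, 0]
  | _ => [1, 2, 2, 5, 2, 2, 0, 2, 2, 4, 2, 2, 5, 2, 2, 0, 3, 5, 5, 3, 1, 2, 2, 5, 2, 2, 0, 2, 2, 4, 2, 
    2, 5, 2, 2, 4, 2, 2, 4, 3, 1, 1, 3, 5, 2, 2, 1, 2, 2, 0, 2, 2, 4, 2, 0, 0, 2, 3, 0, 4, 0, 4, 2, 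
    5, 0, 3, 3, 3, 1, 5, 3, 3, 5, 1, 3]

def chkA : ℕ × ℕ × ℕ × ℕ × Bool × ℕ → Bool
  | (n0, n1, n2, n3, k, i) =>
    allR n0 n1 n2 n3 (walk (goalB k i) (wkA (n0 + n1 + n2 + n3)))

def chkC : ℕ × ℕ × ℕ × ℕ × Bool × ℕ → Bool
  | (n0, n1, n2, n3, k, i) =>
    allR n0 n1 n2 n3 (fun w => !coxB w || walk (goalB k i) (wkA (n0 + n1 + n2 + n3)) w)

def chkB : ℕ × ℕ × ℕ × ℕ × List (List ℕ) → Bool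
  | (n0, n1, n2, n3, T) =>
    allR n0 n1 n2 n3 (fun w => !coxB w || walk T.contains (wkB (n0 + n1 + n2 + n3)) w)

theorem A_chk : ∀ e ∈ Alist, chkA e = true := by decide +kernel
theorem C_chk : ∀ e ∈ Clist, chkC e = true := by decide +kernel
theorem B_chk : ∀ e ∈ Blist, chkB e = true := by decide +kernel
theorem B_inj : ∀ e ∈ Blist, ∀ s ∈ e.2.2.2.2, ∀ s' ∈ e.2.2.2.2, pcode s = pcode s' → s = s' := by
  decide +kernel

theorem A_bd : ∀ e ∈ Alist, e.1 < 6 ∧ e.2.1 < 6 ∧ e.2.2.1 < 6 ∧ e.2.2.2.1 < 6 ∧ e.2.2.2.2.2 < 4 := by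
  decide +kernel
theorem C_bd : ∀ e ∈ Clist, e.1 < 6 ∧ e.2.1 < 6 ∧ e.2.2.1 < 6 ∧ e.2.2.2.1 < 6 ∧ e.2.2.2.2.2 < 4 := by
  decide +kernel
theorem B_bd : ∀ e ∈ Blist, e.1 < 6 ∧ e.2.1 < 6 ∧ e.2.2.1 < 6 ∧ e.2.2.2.1 < 6 := by
  decide +kernel

def coverB (n0 n1 n2 n3 : ℕ) : Bool :=
  Alist.any (fun e => Nat.ble e.1 n0 && Nat.ble e.2.1 n1 && Nat.ble e.2.2.1 n2 &&
    Nat.ble e.2.2.2.1 n3) ||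
  (Clist.any (fun e => Nat.beq e.1 n0 && Nat.beq e.2.1 n1 && Nat.beq e.2.2.1 n2 &&
    Nat.beq e.2.2.2.1 n3) ||
  (Blist.any (fun e => Nat.beq e.1 n0 && Nat.beq e.2.1 n1 && Nat.beq e.2.2.1 n2 &&
    Nat.beq e.2.2.2.1 n3) ||
  allR n0 n1 n2 n3 (fun w => !coxB w)))

theorem cover_chk : ∀ n0 < 5, ∀ n1 < 5, ∀ n2 < 5, ∀ n3 < 5, coverB n0 n1 n2 n3 = true := by
  decide +kernel

/-! ### The group side -/

def permA : Equiv.Perm (Fin 11) where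
  toFun := ![4,2,6,3,5,0,1,7,8,9,10]
  invFun := ![5,6,1,3,0,4,2,7,8,9,10]
  left_inv := by unfold Function.LeftInverse; decide
  right_inv := by unfold Function.RightInverse Function.LeftInverse; decide

def permB : Equiv.Perm (Fin 11) where
  toFun := ![7,0,3,5,4,2,6,1,9,10,8]
  invFun := ![1,7,5,2,4,3,6,0,10,8,9]
  left_inv := by unfold Function.LeftInverse; decide
  right_inv := by unfold Function.RightInverse Function.LeftInverse; decide

theorem perm_rels : ∀ r ∈ g5Rels, FreeGroup.lift ![permA, permB] r = 1 := by
  intro r hr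
  simp only [g5Rels, Set.mem_insert_iff, Set.mem_singleton_iff] at hr
  rcases hr with rfl | rfl | rfl
  · simp only [map_pow, FreeGroup.lift_apply_of]
    decide +kernel
  · simp only [map_pow, FreeGroup.lift_apply_of]
    decide +kernel
  · rw [map_mul, map_inv, mul_inv_eq_one]
    simp only [map_mul, FreeGroup.lift_apply_of]
    decide +kernel

def phi : G5 →* Equiv.Perm (Fin 11) := PresentedGroup.toGroup perm_rels

theorem phi_a : phi ga = permA := by
  simp only [phi, ga, PresentedGroup.toGroup.of]; rfl

theorem phi_b : phi gb = permB := by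
  simp only [phi, gb, PresentedGroup.toGroup.of]; rfl

def rW {α : Type*} [Group α] (a b : α) : ℕ → α
  | 0 => a
  | 1 => b⁻¹ * a * b
  | 2 => (b * a)⁻¹ * a * (b * a)
  | 3 => (b * a * a)⁻¹ * a * (b * a * a)
  | 4 => (a * a * b)⁻¹ * b * (a * a * b)
  | 5 => a⁻¹ * b * a
  | 6 => (a * a)⁻¹ * b * (a * a)
  | 7 => b
  | x + 8 => rW a b x * rW a b x

theorem rW_map {α β : Type*} [Group α] [Group β] (f : α →* β) (a b : α) : ∀ x : ℕ,
    f (rW a b x) = rW (f a) (f b) x := by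
  intro x
  fun_induction rW a b x with
  | case9 x ih => rw [map_mul, ih]; simp [rW]
  | _ => simp [rW]

theorem rW_pt : ∀ x < 16, ∀ p : Fin 11, (rW permA permB x p).val = pt x p.val := by
  decide +kernel

def rr (x : ℕ) : G5 := rW ga gb x

def pr (w : List ℕ) : G5 := (w.map rr).prod

theorem pr_append (u v : List ℕ) : pr (u ++ v) = pr u * pr v := by simp [pr]
theorem pr_cons (x : ℕ) (v : List ℕ) : pr (x :: v) = rr x * pr v := by simp [pr]
theorem pr_nil : pr [] = 1 := by simp [pr]

theorem phi_rr (x : ℕ) (hx : x < 16) (p : Fin 11) : (phi (rr x) p).val = pt x p.val := by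
  rw [rr, rW_map, phi_a, phi_b, rW_pt x hx p]

theorem phi_pr (w : List ℕ) (hw : WW w) (p : Fin 11) : (phi (pr w) p).val = imgW w p.val := by
  induction w with
  | nil => simp [pr_nil, imgW]
  | cons x w ih =>
    rw [WW_cons] at hw
    rw [pr_cons, map_mul, Equiv.Perm.mul_apply, phi_rr x hw.1, ih hw.2]
    rfl

theorem ga3 : ga * ga * ga = 1 := by
  have : (PresentedGroup.mk g5Rels (FreeGroup.of 0 ^ 3) : G5) = 1 :=
    PresentedGroup.one_of_mem (by simp [g5Rels])
  rw [map_pow, pow_three'] at this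
  exact this

theorem gb3 : gb * gb * gb = 1 := by
  have : (PresentedGroup.mk g5Rels (FreeGroup.of 1 ^ 3) : G5) = 1 :=
    PresentedGroup.one_of_mem (by simp [g5Rels])
  rw [map_pow, pow_three'] at this
  exact this

theorem gab : ga * gb * ga * gb = gb * ga * gb * ga := by
  have : (PresentedGroup.mk g5Rels (FreeGroup.of 0 * FreeGroup.of 1 * FreeGroup.of 0 *
      FreeGroup.of 1 *
      (FreeGroup.of 1 * FreeGroup.of 0 * FreeGroup.of 1 * FreeGroup.of 0)⁻¹) : G5) = 1 :=
    PresentedGroup.one_of_mem (by simp [g5Rels])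
  rw [map_mul, map_inv, mul_inv_eq_one] at this
  simp only [map_mul] at this
  exact this

def qw : ℕ → List ℕ
  | 0 => []
  | 1 => [0, 7]
  | 2 => [8, 7, 8]
  | _ => [7, 0]

def zw : ℕ → List ℕ
  | 0 => []
  | n + 1 => 0 :: 7 :: 0 :: 7 :: zw n

def nfw (i q m : ℕ) : List ℕ := zw i ++ (qw q ++ List.replicate m 0)

theorem quat1 {α : Type*} [Group α] (c0 c1 c2 z : α) (z2 : Commute z c2)
    (i0 : c0⁻¹ = z⁻¹ * c0) (i1 : c1⁻¹ = z⁻¹ * c1) (z0 : Commute z c0)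
    (e : c1 * c0 = z⁻¹ * c2) (i2 : c2⁻¹ = z⁻¹ * c2) : c0 * c1 = z ^ 2 * c2 := by
  have h3 : c0 * c1 = (c1⁻¹ * c0⁻¹)⁻¹ := by group
  have h4 : c1⁻¹ * c0⁻¹ = z⁻¹ * z⁻¹ * (c1 * c0) := by
    rw [i1, i0, z0.inv_left.eq]
    have : z⁻¹ * c1 * (c0 * z⁻¹) = z⁻¹ * (c1 * c0) * z⁻¹ := by group
    rw [this, e, mul_assoc, mul_assoc, z2.symm.inv_right.eq]
    group
  rw [h3, h4, e, ← i2, _root_.mul_inv_rev, inv_inv, (z2.symm.inv_right.mul_right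
    z2.symm.inv_right).inv_right.eq]
  group

theorem quat {α : Type*} [Group α] (c0 c1 c2 z : α) (Z0 : Commute z c0) (Z1 : Commute z c1)
    (Z2 : Commute z c2) (h0 : c0 * c0 = z) (h1 : c1 * c1 = z) (h2 : c2 * c2 = z)
    (h : c2 * c1 * c0 = 1) :
    z ^ 6 = 1 ∧ c0 * c1 = z ^ 2 * c2 ∧ c1 * c2 = z ^ 2 * c0 ∧ c2 * c0 = z ^ 2 * c1 ∧
    c1 * c0 = z ^ 5 * c2 ∧ c0 * c2 = z ^ 5 * c1 ∧ c2 * c1 = z ^ 5 * c0 := by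
  have i0 : c0⁻¹ = z⁻¹ * c0 := by rw [← h0]; group
  have i1 : c1⁻¹ = z⁻¹ * c1 := by rw [← h1]; group
  have i2 : c2⁻¹ = z⁻¹ * c2 := by rw [← h2]; group
  have e21 : c2 * c1 = z⁻¹ * c0 := by rw [← i0]; exact eq_inv_of_mul_eq_one_left h
  have e10 : c1 * c0 = z⁻¹ * c2 := by
    rw [← i2]; rw [mul_assoc] at h; exact eq_inv_of_mul_eq_one_right h
  have e02 : c0 * c2 = z⁻¹ * c1 := by
    rw [← i1]
    apply eq_inv_of_mul_eq_one_left
    rw [mul_assoc, e21, i0.symm, mul_inv_cancel]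
  have e01 := quat1 c0 c1 c2 z Z2 i0 i1 Z0 e10 i2
  have e12 := quat1 c1 c2 c0 z Z0 i1 i2 Z1 e21 i0
  have e20 := quat1 c2 c0 c1 z Z1 i2 i0 Z2 e02 i1
  have h6 : z ^ 6 = 1 := by
    have k1 : c1 * c2 * c1 = z ^ 4 * c2 := by
      rw [e12, mul_assoc, e01, ← mul_assoc, ← pow_add]
    have k2 : c1 * c2 * c1 = z⁻¹ * z⁻¹ * c2 := by
      rw [mul_assoc, e21, ← mul_assoc, Z1.symm.inv_right.eq, mul_assoc, e10, mul_assoc]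
    have k3 := mul_right_cancel (k1.symm.trans k2)
    calc z ^ 6 = z * z * z ^ 4 := by group
      _ = 1 := by rw [k3]; group
  have h5 : z⁻¹ = z ^ 5 := by
    rw [inv_eq_iff_mul_eq_one, ← pow_succ', h6]
  rw [h5] at e21 e10 e02
  exact ⟨h6, e01, e12, e20, e10, e02, e21⟩

theorem pr_rep (m : ℕ) : pr (List.replicate m 0) = ga ^ m := by
  simp [pr, rr, rW]

theorem pr_zw (m : ℕ) : pr (zw m) = (ga * gb * ga * gb) ^ m := by
  induction m with
  | zero => simp [zw, pr_nil]
  | succ n ih =>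
    rw [pow_succ', zw]
    simp only [pr_cons, ih, rr, rW, mul_assoc]

def qg : ℕ → G5
  | 0 => 1
  | 1 => ga * gb
  | 2 => ga * ga * gb * (ga * ga)
  | _ => gb * ga

theorem pr_qw (q : ℕ) : pr (qw q) = qg q := by
  unfold qw qg
  split <;> simp [pr, rr, rW, mul_assoc]

theorem pr_nfw (i q m : ℕ) : pr (nfw i q m) = (ga * gb * ga * gb) ^ i * (qg q * ga ^ m) := by
  rw [nfw, pr_append, pr_append, pr_rep, pr_zw, pr_qw]

theorem ga_inv : ga⁻¹ = ga * ga := by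
  rw [inv_eq_iff_mul_eq_one, ← mul_assoc, ga3]
theorem gb_inv : gb⁻¹ = gb * gb := by
  rw [inv_eq_iff_mul_eq_one, ← mul_assoc, gb3]

theorem zga : Commute (ga * gb * ga * gb) ga := by
  have : (ga * gb * ga * gb) * ga = ga * (gb * ga * gb * ga) := by group
  rw [← gab] at this
  exact this

theorem zgb : Commute (ga * gb * ga * gb) gb := by
  have : (gb * ga * gb * ga) * gb = gb * (ga * gb * ga * gb) := by group
  rw [← gab] at this
  exact this

theorem g5quat : (ga * gb * ga * gb) ^ 6 = 1 ∧ ∀ q < 4, ∀ j < 4,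
    ∃ i, ∃ k < 4, qg q * qg j = (ga * gb * ga * gb) ^ i * qg k := by
  have hz := zga
  have hz' := zgb
  have a3' : ga * (ga * ga) = 1 := by rw [← mul_assoc, ga3]
  obtain ⟨h6, e01, e12, e20, e10, e02, e21⟩ := quat (qg 1) (qg 2) (qg 3) (ga * gb * ga * gb)
    (hz.mul_right hz') (((hz.mul_right hz).mul_right hz').mul_right (hz.mul_right hz))
    (hz'.mul_right hz) (by simp [qg, mul_assoc])
    (by
      have : qg 2 * qg 2 = ga * ga * gb * (ga * (ga * ga)) * ga * gb * ga * ga := by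
        simp [qg, mul_assoc]
      rw [this, a3', mul_one]
      have : ga * ga * gb * ga * gb * ga * ga = ga * (ga * gb * ga * gb) * (ga * ga) := by
        simp [mul_assoc]
      rw [this, ← hz.eq, mul_assoc, a3', mul_one])
    (by rw [gab]; simp [qg, mul_assoc])
    (by
      have : qg 3 * qg 2 * qg 1 = gb * (ga * ga * ga) * gb * (ga * ga * ga) * gb := by
        simp [qg, mul_assoc]
      rw [this, ga3, mul_one, mul_one, gb3])
  have s1 : qg 1 * qg 1 = (ga * gb * ga * gb) ^ 1 * qg 0 := by simp [qg, mul_assoc]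
  have s3 : qg 3 * qg 3 = (ga * gb * ga * gb) ^ 1 * qg 0 := by
    rw [gab]; simp [qg, mul_assoc]
  have s2 : qg 2 * qg 2 = (ga * gb * ga * gb) ^ 1 * qg 0 := by
    have : qg 2 * qg 2 = ga * ga * gb * (ga * (ga * ga)) * ga * gb * ga * ga := by
        simp [qg, mul_assoc]
    rw [this, a3', mul_one]
    have : ga * ga * gb * ga * gb * ga * ga = ga * (ga * gb * ga * gb) * (ga * ga) := by
      simp [mul_assoc]
    rw [this, ← hz.eq, mul_assoc, a3', mul_one]
    simp [qg]
  refine ⟨h6, ?_⟩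
  intro q hq j hj
  by_cases hq0 : q = 0
  · subst hq0
    exact ⟨0, j, hj, by simp [qg]⟩
  by_cases hj0 : j = 0
  · subst hj0
    exact ⟨0, q, hq, by simp [qg]⟩
  have hq' : q = 1 ∨ q = 2 ∨ q = 3 := by omega
  have hj' : j = 1 ∨ j = 2 ∨ j = 3 := by omega
  rcases hq' with rfl | rfl | rfl <;> rcases hj' with rfl | rfl | rfl
  · exact ⟨1, 0, by norm_num, s1⟩
  · exact ⟨_, 3, by norm_num, e01⟩
  · exact ⟨_, 2, by norm_num, e02⟩
  · exact ⟨_, 3, by norm_num, e10⟩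
  · exact ⟨1, 0, by norm_num, s2⟩
  · exact ⟨_, 1, by norm_num, e12⟩
  · exact ⟨_, 2, by norm_num, e20⟩
  · exact ⟨_, 1, by norm_num, e21⟩
  · exact ⟨1, 0, by norm_num, s3⟩

def IsNf (g : G5) : Prop :=
  ∃ i, ∃ q < 4, ∃ m < 3, g = (ga * gb * ga * gb) ^ i * (qg q * ga ^ m)

theorem IsNf.mula {g : G5} (h : IsNf g) : IsNf (g * ga) := by
  obtain ⟨i, q, hq, m, hm, rfl⟩ := h
  by_cases h2 : m = 2
  · subst h2
    refine ⟨i, q, hq, 0, by norm_num, ?_⟩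
    have : ga ^ 2 * ga = 1 := by rw [pow_two, ga3]
    rw [mul_assoc, mul_assoc (qg q), this, pow_zero]
  · exact ⟨i, q, hq, m + 1, by omega, by rw [pow_succ]; simp only [mul_assoc]⟩

theorem IsNf.mulb {g : G5} (h : IsNf g) : IsNf (g * gb) := by
  obtain ⟨i, q, hq, m, hm, rfl⟩ := h
  have key : ∃ j < 4, ∃ m' < 3, ga ^ m * gb = qg j * ga ^ m' := by
    have a3' : ga * (ga * ga) = 1 := by rw [← mul_assoc, ga3]
    have hm' : m = 0 ∨ m = 1 ∨ m = 2 := by omega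
    rcases hm' with rfl | rfl | rfl
    · exact ⟨3, by norm_num, 2, by norm_num, by simp [qg, pow_two, mul_assoc, a3']⟩
    · exact ⟨1, by norm_num, 0, by norm_num, by simp [qg]⟩
    · exact ⟨2, by norm_num, 1, by norm_num, by simp [qg, pow_two, mul_assoc, a3']⟩
  obtain ⟨j, hj, m', hm', e⟩ := key
  obtain ⟨i', k, hk, e'⟩ := g5quat.2 q hq j hj
  refine ⟨i + i', k, hk, m', hm', ?_⟩
  rw [mul_assoc, mul_assoc (qg q), e, ← mul_assoc (qg q), e', pow_add]
  simp only [mul_assoc]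

theorem isNf_all (g : G5) : IsNf g := by
  have hg : g ∈ Subgroup.closure (Set.range (PresentedGroup.of (rels := g5Rels))) := by
    rw [PresentedGroup.closure_range_of]; trivial
  induction hg using Subgroup.closure_induction_right with
  | one => exact ⟨0, 0, by norm_num, 0, by norm_num, by simp [qg]⟩
  | mul_right x hx y hy ih =>
    obtain ⟨j, rfl⟩ := hy
    fin_cases j
    · exact ih.mula
    · exact ih.mulb
  | mul_inv_cancel x hx y hy ih =>
    obtain ⟨j, rfl⟩ := hy
    fin_cases j
    · have := ih.mula.mula
      rw [mul_assoc, ← ga_inv] at this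
      exact this
    · have := ih.mulb.mulb
      rw [mul_assoc, ← gb_inv] at this
      exact this

theorem nf_ex (g : G5) : ∃ i < 6, ∃ q < 4, ∃ m < 3, g = pr (nfw i q m) := by
  obtain ⟨i, q, hq, m, hm, rfl⟩ := isNf_all g
  refine ⟨i % 6, Nat.mod_lt _ (by norm_num), q, hq, m, hm, ?_⟩
  rw [pr_nfw]
  congr 1
  exact pow_eq_pow_mod i g5quat.1

theorem nfw_ww : ∀ i < 6, ∀ q < 4, ∀ m < 3, ∀ x ∈ nfw i q m, x < 16 := by decide +kernel

theorem nfw_one : ∀ i < 6, ∀ q < 4, ∀ m < 3, (∀ p < 11, imgW (nfw i q m) p = p) →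
    nfw i q m = [] := by decide +kernel

theorem phi_inj : Function.Injective phi := by
  rw [injective_iff_map_eq_one]
  intro g hg
  obtain ⟨i, hi, q, hq, m, hm, rfl⟩ := nf_ex g
  rw [nfw_one i hi q hq m hm, pr_nil]
  intro p hp
  rw [← phi_pr _ (nfw_ww i hi q hq m hm) ⟨p, hp⟩, hg]
  rfl

theorem eq_of_img (u v : List ℕ) (hu : WW u) (hv : WW v)
    (h : ∀ p < 11, imgW u p = imgW v p) : pr u = pr v := by
  apply phi_inj
  ext p
  rw [phi_pr u hu, phi_pr v hv, h p.val p.isLt]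

theorem img_of_eq (u v : List ℕ) (hu : WW u) (hv : WW v) (h : pr u = pr v) :
    ∀ p < 11, imgW u p = imgW v p := by
  intro p hp
  rw [← phi_pr u hu ⟨p, hp⟩, ← phi_pr v hv ⟨p, hp⟩, h]

theorem pcode_of_eq (u v : List ℕ) (hu : WW u) (hv : WW v) (h : pr u = pr v) :
    pcode u = pcode v := by
  have := img_of_eq u v hu hv h
  simp only [pcode, this 0 (by norm_num), this 1 (by norm_num), this 8 (by norm_num)]

theorem cj_img : ∀ x < 16, ∀ y < 16, ∀ p < 11, imgW [y, cj x y] p = imgW [x, y] p := by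
  decide +kernel

theorem rr_cj (x y : ℕ) (hx : x < 16) (hy : y < 16) : rr y * rr (cj x y) = rr x * rr y := by
  have := eq_of_img [y, cj x y] [x, y] (by simp [WW, hy, cj_lt]) (by simp [WW, hx, hy])
    (cj_img x hx y hy)
  simpa [pr] using this

theorem QQ.pr {u v : List ℕ} (h : QQ u v) : pr u = pr v := by
  induction h with
  | move p x y q hx hy =>
    simp only [pr_append, pr_cons, ← mul_assoc]
    rw [mul_assoc _ (rr x), mul_assoc _ (rr y), rr_cj x y hx hy]
  | refl => rfl
  | symm _ ih => exact ih.symm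
  | trans _ _ ih1 ih2 => exact ih1.trans ih2

theorem CC_img : ∀ k : Bool, ∀ l < 16, ∀ p < 11, imgW (CC k l) p = imgW [] p := by
  decide +kernel

theorem pr_CC (k : Bool) (l : ℕ) (hl : l < 16) : pr (CC k l) = 1 := by
  rw [← pr_nil]
  exact eq_of_img _ _ (CC_ww k l hl) WW_nil (CC_img k l hl)

def npw (w : List ℕ) : ℕ → List ℕ
  | 0 => []
  | n + 1 => w ++ npw w n

theorem npw_ww (w : List ℕ) (hw : WW w) (n : ℕ) : WW (npw w n) := by
  induction n with
  | zero => exact WW_nil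
  | succ n ih => exact WW_append.2 ⟨hw, ih⟩

theorem npw_pr (w : List ℕ) (n : ℕ) : pr (npw w n) = pr w ^ n := by
  induction n with
  | zero => simp [npw, pr_nil]
  | succ n ih => rw [npw, pr_append, ih, pow_succ']

def idB (w : List ℕ) : Bool := (List.range 11).all fun p => Nat.beq (imgW w p) p

theorem idB_pr (w : List ℕ) (hw : WW w) (h : idB w = true) : pr w = 1 := by
  rw [← pr_nil]
  apply eq_of_img _ _ hw WW_nil
  intro p hp
  rw [idB, List.all_eq_true] at h
  exact Nat.eq_of_beq_eq_true (h p (by simpa using hp))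

def comB (w : List ℕ) (x : ℕ) : Bool :=
  (List.range 11).all fun p => Nat.beq (imgW w (pt x p)) (pt x (imgW w p))

theorem nfw_ord : ∀ i < 6, ∀ q < 4, ∀ m < 3,
    idB (npw (nfw i q m) 4) = true ∨ idB (npw (nfw i q m) 6) = true ∨
      (coxB (nfw i q m) = true ∧ ∀ x < 4, comB (nfw i q m) x = false) := by decide +kernel

theorem ord_nf (c : G5) (hc : orderOf c = 12) : ∃ w, WW w ∧ pr w = c ∧ coxB w = true ∧
    ∀ x < 4, comB w x = false := by
  obtain ⟨i, hi, q, hq, m, hm, rfl⟩ := nf_ex c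
  have hw : WW (nfw i q m) := nfw_ww i hi q hq m hm
  refine ⟨_, hw, rfl, ?_⟩
  rcases nfw_ord i hi q hq m hm with h | h | h
  · have := idB_pr _ (npw_ww _ hw _) h
    rw [npw_pr] at this
    have := orderOf_dvd_of_pow_eq_one this
    rw [hc] at this
    norm_num at this
  · have := idB_pr _ (npw_ww _ hw _) h
    rw [npw_pr] at this
    have := orderOf_dvd_of_pow_eq_one this
    rw [hc] at this
    norm_num at this
  · exact h

theorem ord_cox (w : List ℕ) (hw : WW w) (hc : orderOf (pr w) = 12) : coxB w = true := by
  obtain ⟨v, hv, he, hb, -⟩ := ord_nf _ hc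
  rw [coxB, pcode_of_eq w v hw hv he.symm]
  exact hb

theorem com_img : ∀ x < 16, ∀ p < 11, imgW [x, x % 4] p = imgW [x % 4, x] p := by
  decide +kernel

theorem ord_two (w : List ℕ) (hw : WW w) (hc : orderOf (pr w) = 12) :
    ∃ x ∈ w, ∃ y ∈ w, x % 4 ≠ y % 4 := by
  by_contra hcon
  push Not at hcon
  obtain ⟨v, hv, he, -, hb⟩ := ord_nf _ hc
  have hex : ∃ p < 4, ∀ x ∈ w, x % 4 = p := by
    cases w with
    | nil => exact ⟨0, by norm_num, by simp⟩
    | cons x w =>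
      exact ⟨x % 4, Nat.mod_lt _ (by norm_num), fun y hy => hcon y hy x (by simp)⟩
  obtain ⟨p, hp, hx⟩ := hex
  have hcom : pr w * rr p = rr p * pr w := by
    have : ∀ u : List ℕ, WW u → (∀ x ∈ u, x % 4 = p) → Commute (pr u) (rr p) := by
      intro u
      induction u with
      | nil => intro _ _; rw [pr_nil]; exact Commute.one_left _
      | cons x u ih =>
        intro hu hx
        rw [WW_cons] at hu
        rw [pr_cons]
        refine Commute.mul_left ?_ (ih hu.2 fun y hy => hx y (by simp [hy]))
        have h1 := hx x (by simp)
        subst h1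
        have h16 : x % 4 < 16 := by omega
        have := eq_of_img [x, x % 4] [x % 4, x] (by simp [WW, hu.1, h16])
          (by simp [WW, hu.1, h16]) (com_img x hu.1)
        simpa [pr, Commute, SemiconjBy] using this
    exact this w hw hx
  have hf : comB v p = true := by
    rw [comB, List.all_eq_true]
    intro q hq
    have hq : q < 11 := by simpa using hq
    have hp16 : p < 16 := by omega
    have h1 := img_of_eq (v ++ [p]) ([p] ++ v) (WW_append.2 ⟨hv, by simp [WW, hp16]⟩)
      (WW_append.2 ⟨by simp [WW, hp16], hv⟩)
      (by rw [pr_append, pr_append, he]; simpa [pr] using hcom) q hq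
    rw [Nat.beq_eq]
    simpa [imgW, List.foldr_append] using h1
  rw [hb p hp] at hf
  exact absurd hf (by decide)

theorem conj_fold (w : List ℕ) : WW w → ∀ x < 16,
    (w.foldl cj x) < 16 ∧ (w.foldl cj x) / 4 = x / 4 ∧ (pr w)⁻¹ * rr x * pr w = rr (w.foldl cj x) := by
  induction w with
  | nil => intro _ x hx; simp [pr_nil, hx]
  | cons y w ih =>
    intro hw x hx
    rw [WW_cons] at hw
    obtain ⟨h1, h2, h3⟩ := ih hw.2 (cj x y) (cj_lt _ _)
    refine ⟨h1, h2.trans (cj_cls x hx y hw.1), ?_⟩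
    rw [List.foldl_cons, ← h3, pr_cons]
    have : rr (cj x y) = (rr y)⁻¹ * (rr x * rr y) := by
      rw [← rr_cj x y hx hw.1]; group
    rw [this]
    group

theorem conj_rr (g : G5) (x : ℕ) (hx : x < 16) : ∃ y < 16, y / 4 = x / 4 ∧ g * rr x * g⁻¹ = rr y := by
  obtain ⟨i, hi, q, hq, m, hm, e⟩ := nf_ex g⁻¹
  obtain ⟨h1, h2, h3⟩ := conj_fold _ (nfw_ww i hi q hq m hm) x hx
  refine ⟨_, h1, h2, ?_⟩
  rw [← h3, ← e, inv_inv]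

theorem pt_inj : ∀ x < 16, ∀ y < 16, (∀ p < 11, pt x p = pt y p) → x = y := by decide +kernel

theorem rr_inj (x y : ℕ) (hx : x < 16) (hy : y < 16) (h : rr x = rr y) : x = y := by
  apply pt_inj x hx y hy
  intro p hp
  rw [← phi_rr x hx ⟨p, hp⟩, ← phi_rr y hy ⟨p, hp⟩, h]

theorem rr_conj (x y : ℕ) (hx : x < 16) (hy : y < 16) (h : IsConj (rr x) (rr y)) :
    x / 4 = y / 4 := by
  obtain ⟨g, hg⟩ := isConj_iff.1 h
  obtain ⟨z, hz, h1, h2⟩ := conj_rr g x hx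
  rw [rr_inj y z hy hz (hg.symm.trans h2)]
  exact h1.symm

theorem refl_rr (t : G5) (ht : IsReflection5 t) : ∃ x < 16, t = rr x := by
  have key : ∀ x < 16, IsConj (rr x) t → ∃ x < 16, t = rr x := by
    intro x hx h
    obtain ⟨g, hg⟩ := isConj_iff.1 h
    obtain ⟨z, hz, h1, h2⟩ := conj_rr g x hx
    exact ⟨z, hz, hg.symm.trans h2⟩
  rcases ht with h | h | h | h
  · exact key 0 (by norm_num) h
  · exact key 7 (by norm_num) h
  · refine key 8 (by norm_num) ?_
    have : rr 8 = ga ^ 2 := by simp [rr, rW, pow_two]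
    rw [this]; exact h
  · refine key 15 (by norm_num) ?_
    have : rr 15 = gb ^ 2 := by simp [rr, rW, pow_two]
    rw [this]; exact h
theorem count_csL (n0 n1 n2 n3 a : ℕ) : (csL n0 n1 n2 n3).count a =
    if a = 0 then n0 else if a = 1 then n1 else if a = 2 then n2 else if a = 3 then n3 else 0 := by
  simp only [csL, List.count_append, List.count_replicate, beq_iff_eq]
  split_ifs <;> omega

theorem extr (n0 n1 n2 n3 : ℕ) (h0 : n0 < 6) (h1 : n1 < 6) (h2 : n2 < 6) (h3 : n3 < 6)
    (f : List ℕ → Bool) (hf : allR n0 n1 n2 n3 f = true) (w : List ℕ) (hw : WW w)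
    (e0 : n0 ≤ (clsL w).count 0) (e1 : n1 ≤ (clsL w).count 1) (e2 : n2 ≤ (clsL w).count 2)
    (e3 : n3 ≤ (clsL w).count 3) : ∃ u v, QQ w (u ++ v) ∧ f u = true ∧ WW u ∧
      (clsL u).Perm (csL n0 n1 n2 n3) := by
  have hs : (csL n0 n1 n2 n3).Subperm (clsL w) := by
    rw [List.subperm_ext_iff]
    intro a _
    rw [count_csL]
    split_ifs <;> (try subst a) <;> first | assumption | exact Nat.zero_le _
  obtain ⟨u, v, q, hu⟩ := QQ.extract _ w hw hs
  obtain ⟨u', q', hf', hw'⟩ := allR_sound n0 n1 n2 n3 h0 h1 h2 h3 f hf u hu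
  refine ⟨u', v, q.trans (q'.app_right v), hf', hw', ?_⟩
  rw [← hu]
  exact q'.cls.symm

theorem cls_lt (w : List ℕ) (hw : WW w) : ∀ x ∈ clsL w, x < 4 := by
  intro x hx
  obtain ⟨y, hy, rfl⟩ := List.mem_map.1 hx
  have := hw y hy
  show y / 4 < 4
  omega

theorem extrEq (n0 n1 n2 n3 : ℕ) (h0 : n0 < 6) (h1 : n1 < 6) (h2 : n2 < 6) (h3 : n3 < 6)
    (f : List ℕ → Bool) (hf : allR n0 n1 n2 n3 f = true) (w : List ℕ) (hw : WW w)
    (e0 : n0 = (clsL w).count 0) (e1 : n1 = (clsL w).count 1) (e2 : n2 = (clsL w).count 2)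
    (e3 : n3 = (clsL w).count 3) : ∃ u, QQ w u ∧ f u = true ∧ WW u := by
  obtain ⟨u, v, q, hf', hw', hp⟩ := extr n0 n1 n2 n3 h0 h1 h2 h3 f hf w hw e0.le e1.le e2.le e3.le
  have hp2 : (clsL w).Perm (csL n0 n1 n2 n3) := by
    rw [List.perm_iff_count]
    intro a
    rw [count_csL]
    split_ifs <;> (try subst a) <;> (try exact Eq.symm (by assumption))
    apply List.count_eq_zero_of_not_mem
    intro ha
    have := cls_lt w hw a ha
    omega
  have hl := q.cls.length_eq
  have hl1 := hp.length_eq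
  have hl2 := hp2.length_eq
  simp only [List.length_map, List.length_append] at hl hl1 hl2
  have hv : v = [] := List.eq_nil_of_length_eq_zero (by omega)
  subst hv
  rw [List.append_nil] at q
  exact ⟨u, q, hf', hw'⟩

theorem step (k : Bool) (i : ℕ) (u v : List ℕ) (hu : WW u) (hv : WW v)
    (hcl : (clsL u).Perm (clsL v)) (hpr : pr u = pr v) (ho : orderOf (pr u) = 12)
    (ru : ∃ l < 16, l / 4 = i ∧ ∃ x, QQ u (CC k l ++ x))
    (rv : ∃ l < 16, l / 4 = i ∧ ∃ x, QQ v (CC k l ++ x))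
    (ih : ∀ x y : List ℕ, x.length < u.length → WW x → WW y → (clsL x).Perm (clsL y) →
      pr x = pr y → orderOf (pr x) = 12 → QQ x y) : QQ u v := by
  obtain ⟨l, hl, hli, x, qx⟩ := ru
  obtain ⟨l', hl', hli', y, qy⟩ := rv
  have wx := (WW_append.1 (qx.ww.1 hu)).2
  have wy := (WW_append.1 (qy.ww.1 hv)).2
  have px := qx.pr
  have py := qy.pr
  rw [pr_append, pr_CC k l hl, one_mul] at px
  rw [pr_append, pr_CC k l' hl', one_mul] at py
  have hxy : (clsL x).Perm (clsL y) := by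
    have h1 := qx.cls.symm.trans (hcl.trans qy.cls)
    simp only [clsL, List.map_append] at h1
    have h2 := CC_cls k l l' hl hl' (hli.trans hli'.symm)
    simp only [clsL] at h2
    rw [h2, List.perm_append_left_iff] at h1
    exact h1
  have hlen : x.length < u.length := by
    have h1 := qx.cls.length_eq
    have h2 := CC_ne k l
    simp only [List.length_map, List.length_append] at h1
    omega
  rw [px] at ho
  have q := ih x y hlen wx wy hxy (by rw [← px, ← py, hpr]) ho
  obtain ⟨a, ha, b, hb, hab⟩ := ord_two x wx ho
  exact qx.trans ((QQ.transC k x wx a b ha hb hab l l' hl hl' (hli.trans hli'.symm)).trans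
    ((q.app_left _).trans qy.symm))

theorem redA (e : ℕ × ℕ × ℕ × ℕ × Bool × ℕ) (he : e ∈ Alist) (w : List ℕ) (hw : WW w)
    (e0 : e.1 ≤ (clsL w).count 0) (e1 : e.2.1 ≤ (clsL w).count 1)
    (e2 : e.2.2.1 ≤ (clsL w).count 2) (e3 : e.2.2.2.1 ≤ (clsL w).count 3) :
    ∃ l < 16, l / 4 = e.2.2.2.2.2 ∧ ∃ x, QQ w (CC e.2.2.2.2.1 l ++ x) := by
  have hc := A_chk e he
  obtain ⟨h0, h1, h2, h3, hi⟩ := A_bd e he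
  obtain ⟨n0, n1, n2, n3, k, i⟩ := e
  obtain ⟨u, v, q, hf, hu, -⟩ := extr n0 n1 n2 n3 h0 h1 h2 h3 _ hc w hw e0 e1 e2 e3
  obtain ⟨u', q', hg⟩ := walk_sound _ _ _ hu hf
  obtain ⟨l, hl, hli, x, qx⟩ := goal_sound k i hi u' (q'.ww.1 hu) hg
  refine ⟨l, hl, hli, x ++ v, ?_⟩
  have := q.trans ((q'.trans qx).app_right v)
  rwa [List.append_assoc] at this

theorem redC (e : ℕ × ℕ × ℕ × ℕ × Bool × ℕ) (he : e ∈ Clist) (w : List ℕ) (hw : WW w)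
    (ho : orderOf (pr w) = 12)
    (e0 : e.1 = (clsL w).count 0) (e1 : e.2.1 = (clsL w).count 1)
    (e2 : e.2.2.1 = (clsL w).count 2) (e3 : e.2.2.2.1 = (clsL w).count 3) :
    ∃ l < 16, l / 4 = e.2.2.2.2.2 ∧ ∃ x, QQ w (CC e.2.2.2.2.1 l ++ x) := by
  have hc := C_chk e he
  unfold chkC at hc
  obtain ⟨h0, h1, h2, h3, hi⟩ := C_bd e he
  obtain ⟨n0, n1, n2, n3, k, i⟩ := e
  obtain ⟨u, q, hf, hu⟩ := extrEq n0 n1 n2 n3 h0 h1 h2 h3 _ hc w hw e0 e1 e2 e3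
  rw [q.pr] at ho
  simp only [ord_cox u hu ho, Bool.not_true, Bool.false_or] at hf
  obtain ⟨u', q', hg⟩ := walk_sound _ _ _ hu hf
  obtain ⟨l, hl, hli, x, qx⟩ := goal_sound k i hi u' (q'.ww.1 hu) hg
  exact ⟨l, hl, hli, x, q.trans (q'.trans qx)⟩

theorem redB (e : ℕ × ℕ × ℕ × ℕ × List (List ℕ)) (he : e ∈ Blist) (w : List ℕ) (hw : WW w)
    (ho : orderOf (pr w) = 12)
    (e0 : e.1 = (clsL w).count 0) (e1 : e.2.1 = (clsL w).count 1)
    (e2 : e.2.2.1 = (clsL w).count 2) (e3 : e.2.2.2.1 = (clsL w).count 3) :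
    ∃ s ∈ e.2.2.2.2, QQ w s := by
  have hc := B_chk e he
  unfold chkB at hc
  obtain ⟨h0, h1, h2, h3⟩ := B_bd e he
  obtain ⟨n0, n1, n2, n3, T⟩ := e
  obtain ⟨u, q, hf, hu⟩ := extrEq n0 n1 n2 n3 h0 h1 h2 h3 _ hc w hw e0 e1 e2 e3
  rw [q.pr] at ho
  simp only [ord_cox u hu ho, Bool.not_true, Bool.false_or] at hf
  obtain ⟨u', q', hg⟩ := walk_sound _ _ _ hu hf
  exact ⟨u', by simpa using hg, q.trans q'⟩

theorem big_A (i : ℕ) (hi : i < 4) : ∃ e ∈ Alist, (e.1 = if i = 0 then 5 else 0) ∧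
    (e.2.1 = if i = 1 then 5 else 0) ∧ (e.2.2.1 = if i = 2 then 5 else 0) ∧
    (e.2.2.2.1 = if i = 3 then 5 else 0) := by
  revert i
  decide +kernel

theorem QQ_main (n : ℕ) : ∀ u v : List ℕ, u.length = n → WW u → WW v →
    (clsL u).Perm (clsL v) → pr u = pr v → orderOf (pr u) = 12 → QQ u v := by
  induction n using Nat.strong_induction_on with
  | _ n IH =>
  intro u v hn hu hv hcl hpr ho
  have ho' : orderOf (pr v) = 12 := by rw [← hpr]; exact ho
  have ih : ∀ x y : List ℕ, x.length < u.length → WW x → WW y → (clsL x).Perm (clsL y) →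
      pr x = pr y → orderOf (pr x) = 12 → QQ x y := by
    intro x y hl
    exact IH x.length (by omega) x y rfl
  have hct : ∀ a, (clsL v).count a = (clsL u).count a := fun a => (hcl.count_eq a).symm
  have caseA : ∀ e ∈ Alist, e.1 ≤ (clsL u).count 0 → e.2.1 ≤ (clsL u).count 1 →
      e.2.2.1 ≤ (clsL u).count 2 → e.2.2.2.1 ≤ (clsL u).count 3 → QQ u v := by
    intro e he e0 e1 e2 e3
    refine step _ _ u v hu hv hcl hpr ho (redA e he u hu e0 e1 e2 e3) (redA e he v hv ?_ ?_ ?_ ?_) ih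
      <;> rw [hct] <;> assumption
  by_cases hb : ∃ i < 4, 5 ≤ (clsL u).count i
  · obtain ⟨i, hi, h5⟩ := hb
    obtain ⟨e, he, e0, e1, e2, e3⟩ := big_A i hi
    refine caseA e he ?_ ?_ ?_ ?_
    · rw [e0]; split_ifs with h
      · rw [← h]; exact h5
      · exact Nat.zero_le _
    · rw [e1]; split_ifs with h
      · rw [← h]; exact h5
      · exact Nat.zero_le _
    · rw [e2]; split_ifs with h
      · rw [← h]; exact h5
      · exact Nat.zero_le _
    · rw [e3]; split_ifs with h
      · rw [← h]; exact h5
      · exact Nat.zero_le _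
  · push Not at hb
    have hc := cover_chk _ (hb 0 (by norm_num)) _ (hb 1 (by norm_num)) _ (hb 2 (by norm_num)) _
      (hb 3 (by norm_num))
    simp only [coverB, Bool.or_eq_true, List.any_eq_true, Bool.and_eq_true, Nat.ble_eq,
      Nat.beq_eq] at hc
    rcases hc with ⟨e, he, ⟨⟨e0, e1⟩, e2⟩, e3⟩ | ⟨e, he, ⟨⟨e0, e1⟩, e2⟩, e3⟩ |
      ⟨e, he, ⟨⟨e0, e1⟩, e2⟩, e3⟩ | hc
    · exact caseA e he e0 e1 e2 e3
    · refine step _ _ u v hu hv hcl hpr ho (redC e he u hu ho e0 e1 e2 e3)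
        (redC e he v hv ho' ?_ ?_ ?_ ?_) ih <;> rw [hct] <;> assumption
    · obtain ⟨s, hs, qs⟩ := redB e he u hu ho e0 e1 e2 e3
      obtain ⟨s', hs', qs'⟩ := redB e he v hv ho' (by rw [hct]; exact e0) (by rw [hct]; exact e1)
        (by rw [hct]; exact e2) (by rw [hct]; exact e3)
      have : s = s' := by
        apply B_inj e he s hs s' hs'
        apply pcode_of_eq _ _ (qs.ww.1 hu) (qs'.ww.1 hv)
        rw [← qs.pr, ← qs'.pr, hpr]
      subst this
      exact qs.trans qs'.symm
    · obtain ⟨s, qs, hs, hw⟩ := extrEq _ _ _ _ ((hb 0 (by norm_num)).trans (by norm_num))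
        ((hb 1 (by norm_num)).trans (by norm_num)) ((hb 2 (by norm_num)).trans (by norm_num))
        ((hb 3 (by norm_num)).trans (by norm_num)) _ hc u hu rfl rfl rfl rfl
      rw [qs.pr] at ho
      simp [ord_cox s hw ho] at hs
/-! ### Tuples -/

def tup (k : ℕ) (u : List ℕ) : Fin k → G5 := fun i => rr (u.getD i.val 0)

theorem tup_move (k : ℕ) (p : List ℕ) (x y : ℕ) (q : List ℕ) (hx : x < 16) (hy : y < 16)
    (hk : (p ++ x :: y :: q).length = k) :
    IsHurwitzMove (tup k (p ++ x :: y :: q)) (tup k (p ++ y :: cj x y :: q)) := by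
  have hk' : p.length + 1 < k := by
    simp only [List.length_append, List.length_cons] at hk
    omega
  refine ⟨p.length, hk', ?_, ?_, ?_⟩
  · simp [tup]
  · have h := rr_cj x y hx hy
    simp only [tup]
    simp only [List.getD_eq_getElem?_getD, List.getElem?_append_right (Nat.le_add_right p.length 1),
      List.getElem?_append_right (Nat.le_refl _), Nat.add_sub_cancel_left, Nat.sub_self,
      List.getElem?_cons_zero, List.getElem?_cons_succ, Option.getD_some]
    rw [mul_assoc, ← h]
    group
  · intro j h1 h2
    simp only [tup, List.getD_eq_getElem?_getD]
    congr 2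
    rcases Nat.lt_or_ge j.val p.length with h | h
    · rw [List.getElem?_append_left h, List.getElem?_append_left h]
    · rw [List.getElem?_append_right h, List.getElem?_append_right h]
      obtain ⟨d, hd⟩ : ∃ d, j.val - p.length = d + 2 := ⟨j.val - p.length - 2, by omega⟩
      rw [hd]
      rfl

theorem QQ.tup {u v : List ℕ} (h : QQ u v) : ∀ k : ℕ, u.length = k →
    SameHurwitzOrbit (tup k u) (tup k v) := by
  induction h with
  | move p x y q hx hy => intro k hk; exact Relation.EqvGen.rel _ _ (tup_move k p x y q hx hy hk)
  | refl => intro k _; exact Relation.EqvGen.refl _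
  | symm h ih =>
    intro k hk
    have := h.cls.length_eq
    simp only [List.length_map] at this
    exact Relation.EqvGen.symm _ _ (ih k (this.trans hk))
  | trans h _ ih1 ih2 =>
    intro k hk
    have := h.cls.length_eq
    simp only [List.length_map] at this
    exact Relation.EqvGen.trans _ _ _ (ih1 k hk) (ih2 k (this.symm.trans hk))

theorem tup_ofFn (k : ℕ) (x : Fin k → ℕ) (t : Fin k → G5) (h : ∀ i, t i = rr (x i)) :
    tup k (List.ofFn x) = t := by
  funext i
  rw [h i]
  simp [tup]

theorem pr_ofFn (k : ℕ) (x : Fin k → ℕ) (t : Fin k → G5) (h : ∀ i, t i = rr (x i)) :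
    pr (List.ofFn x) = (List.ofFn t).prod := by
  rw [pr, List.map_ofFn]
  congr 2
  funext i
  exact (h i).symm

theorem orbit_conj {k : ℕ} {t t' : Fin k → G5} (h : SameHurwitzOrbit t t') :
    ∃ σ : Equiv.Perm (Fin k), ∀ i, IsConj (t i) (t' (σ i)) := by
  induction h with
  | rel t t' h =>
    obtain ⟨i, hi, h1, h2, h3⟩ := h
    refine ⟨Equiv.swap ⟨i, Nat.lt_of_succ_lt hi⟩ ⟨i + 1, hi⟩, ?_⟩
    intro j
    by_cases hj : j = ⟨i, Nat.lt_of_succ_lt hi⟩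
    · subst hj
      rw [Equiv.swap_apply_left, h2, isConj_iff]
      exact ⟨(t ⟨i + 1, hi⟩)⁻¹, by group⟩
    · by_cases hj' : j = ⟨i + 1, hi⟩
      · subst hj'
        rw [Equiv.swap_apply_right, h1]
      · rw [Equiv.swap_apply_of_ne_of_ne hj hj', h3 j]
        · intro h; exact hj (Fin.ext h)
        · intro h; exact hj' (Fin.ext h)
  | refl t => exact ⟨1, fun i => IsConj.refl _⟩
  | symm t t' _ ih =>
    obtain ⟨σ, h⟩ := ih
    refine ⟨σ.symm, fun i => ?_⟩
    have := h (σ.symm i)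
    rw [Equiv.apply_symm_apply] at this
    exact this.symm
  | trans t t' t'' _ _ ih1 ih2 =>
    obtain ⟨σ, h⟩ := ih1
    obtain ⟨τ, h'⟩ := ih2
    exact ⟨τ * σ, fun i => (h i).trans (h' (σ i))⟩

theorem g5_hurwitz_transitive_up_to_classes
    (c : G5) (hc : IsCoxeter5 c) (k : ℕ) (hk : 2 ≤ k)
    (t t' : Fin k → G5)
    (ht : ∀ i, IsReflection5 (t i)) (ht' : ∀ i, IsReflection5 (t' i))
    (hp : (List.ofFn t).prod = c) (hp' : (List.ofFn t').prod = c) :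
    SameHurwitzOrbit t t' ↔
      ∃ σ : Equiv.Perm (Fin k), ∀ i, IsConj (t i) (t' (σ i)) := by
  constructor
  · exact orbit_conj
  · rintro ⟨σ, hσ⟩
    choose x hx hxt using fun i => refl_rr (t i) (ht i)
    choose y hy hyt using fun i => refl_rr (t' i) (ht' i)
    have wx : WW (List.ofFn x) := by
      intro a ha
      obtain ⟨i, rfl⟩ := (List.mem_ofFn' _ _).1 ha
      exact hx i
    have wy : WW (List.ofFn y) := by
      intro a ha
      obtain ⟨i, rfl⟩ := (List.mem_ofFn' _ _).1 ha
      exact hy i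
    have px := pr_ofFn k x t hxt
    have py := pr_ofFn k y t' hyt
    have hcl : (clsL (List.ofFn x)).Perm (clsL (List.ofFn y)) := by
      have h1 : clsL (List.ofFn x) = List.ofFn ((fun i => y i / 4) ∘ σ) := by
        simp only [clsL, List.map_ofFn]
        congr 1
        funext i
        apply rr_conj _ _ (hx i) (hy (σ i))
        rw [← hxt, ← hyt]
        exact hσ i
      have h2 : clsL (List.ofFn y) = List.ofFn (fun i => y i / 4) := by
        simp only [clsL, List.map_ofFn]
        rfl
      rw [h1, h2]
      exact Equiv.Perm.ofFn_comp_perm σ _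
    have q := QQ_main _ _ _ rfl wx wy hcl (by rw [px, py, hp, hp'])
      (by rw [px, hp]; exact hc)
    have := q.tup k (by simp)
    rwa [tup_ofFn k x t hxt, tup_ofFn k y t' hyt] at this
end
end

section
/- Let t₁ and t₂ be two distinct reflections of G4 lying in the same conjugacy class R_j (j ∈ {1,2}). Then the Hurwitz orbit of the pair (t₁, t₂) has exactly three elements, and exactly three of the four reflections of R_j appear as entries of pairs in this orbit. -/
noncomputable section

open Matrix Complex

/-- The Eisenstein integers. -/
abbrev Eis := QuadraticAlgebra ℤ (-1) (-1)

def mkE (a b c d e f g h : ℤ) : Matrix (Fin 2) (Fin 2) Eis :=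
  !![⟨a, b⟩, ⟨c, d⟩; ⟨e, f⟩, ⟨g, h⟩]

def AE : Matrix (Fin 2) (Fin 2) Eis := mkE 0 1 0 (-1) 0 0 1 0
def BE : Matrix (Fin 2) (Fin 2) Eis := mkE 1 0 0 0 1 0 0 1

def wE : Eis := ⟨0, 1⟩

def d2 (m : Matrix (Fin 2) (Fin 2) Eis) : Eis := m 0 0 * m 1 1 - m 0 1 * m 1 0

def elts : List (Matrix (Fin 2) (Fin 2) Eis) :=
  [mkE 1 0 0 0 0 0 1 0,
   mkE 0 1 0 (-1) 0 0 1 0,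
   mkE 1 0 0 0 1 0 0 1,
   mkE (-1) (-1) 1 0 0 0 1 0,
   mkE 0 1 0 (-1) 0 1 0 0,
   mkE 0 0 1 1 1 0 0 1,
   mkE 1 0 0 0 1 1 (-1) (-1),
   mkE (-1) (-1) 1 0 (-1) (-1) 1 1,
   mkE 0 0 1 1 0 1 0 0,
   mkE 0 1 0 (-1) (-1) 0 0 (-1),
   mkE 0 (-1) 0 1 1 0 0 1,
   mkE 1 1 (-1) 0 1 1 (-1) (-1),
   mkE 0 0 1 1 (-1) (-1) 1 1,
   mkE (-1) (-1) 1 0 0 (-1) 0 0,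
   mkE 1 1 (-1) 0 0 1 0 0,
   mkE (-1) 0 0 0 (-1) 0 0 (-1),
   mkE 0 (-1) 0 1 0 0 (-1) 0,
   mkE 0 0 (-1) (-1) 1 1 (-1) (-1),
   mkE (-1) 0 0 0 (-1) (-1) 1 1,
   mkE 0 (-1) 0 1 0 (-1) 0 0,
   mkE 1 1 (-1) 0 0 0 (-1) 0,
   mkE 0 0 (-1) (-1) (-1) 0 0 (-1),
   mkE (-1) 0 0 0 0 0 (-1) 0,
   mkE 0 0 (-1) (-1) 0 (-1) 0 0]

lemma one_mem_elts : (1 : Matrix (Fin 2) (Fin 2) Eis) ∈ elts := by decide +kernel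

lemma A_mem_elts : ∀ m ∈ elts, AE * m ∈ elts := by decide +kernel

lemma B_mem_elts : ∀ m ∈ elts, BE * m ∈ elts := by decide +kernel

lemma A_cube : AE * (AE * AE) = 1 := by decide +kernel

lemma B_cube : BE * (BE * BE) = 1 := by decide +kernel

lemma braid_elts : ∀ m ∈ elts, d2 (m - 1) = 0 → (d2 m = wE ∨ d2 m = wE ^ 2) →
    ∀ n ∈ elts, d2 (n - 1) = 0 → d2 n = d2 m → m ≠ n → m * n * m = n * m * n := by
  decide +kernel

lemma ω_sq : ω ^ 2 = -1 - ω := by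
  have h : IsPrimitiveRoot ω 3 := by
    have := Complex.isPrimitiveRoot_exp 3 (by norm_num)
    simpa [ω] using this
  have h2 := h.geom_sum_eq_zero (by norm_num)
  simp [Finset.sum_range_succ] at h2
  linear_combination h2

lemma ω_im : ω.im ≠ 0 := by
  intro h
  have h2 := ω_sq
  have h3 := congrArg Complex.re h2
  simp [pow_two, h] at h3
  nlinarith [sq_nonneg (ω.re + 1)]

def φ : Eis →+* ℂ where
  toFun z := (z.re : ℂ) + z.im * ω
  map_one' := by simp [QuadraticAlgebra.re_one, QuadraticAlgebra.im_one]
  map_zero' := by simp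
  map_add' x y := by simp; ring
  map_mul' x y := by
    simp
    linear_combination (-(x.im : ℂ) * y.im) * ω_sq

lemma φ_apply (z : Eis) : φ z = (z.re : ℂ) + z.im * ω := rfl

lemma φ_inj : Function.Injective φ := by
  rw [injective_iff_map_eq_zero]
  intro z hz
  rw [φ_apply] at hz
  have him := congrArg Complex.im hz
  simp [ω_im] at him
  have hre := congrArg Complex.re hz
  simp [him] at hre
  ext <;> simp [him, hre]

lemma φ_wE : φ wE = ω := by simp [φ_apply, wE]

def PMat : Matrix (Fin 2) (Fin 2) ℂ := !![0, ω ^ 2; 1, (ω - 1) / 3]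

lemma ω_ne : ω ≠ 0 := Complex.exp_ne_zero _

lemma P_det : IsUnit PMat.det := by
  simp [PMat, Matrix.det_fin_two, ω_ne]

def ERel (g : Matrix (Fin 2) (Fin 2) ℂ) (m : Matrix (Fin 2) (Fin 2) Eis) : Prop :=
  g * PMat = PMat * φ.mapMatrix m

lemma ERel.mul {g h m n} (h1 : ERel g m) (h2 : ERel h n) : ERel (g * h) (m * n) := by
  unfold ERel at *
  rw [map_mul, Matrix.mul_assoc, h2, ← Matrix.mul_assoc, h1, Matrix.mul_assoc]

lemma ERel.one : ERel 1 1 := by unfold ERel; rw [map_one, one_mul, mul_one]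

lemma ERel.sub_one {g m} (h1 : ERel g m) : ERel (g - 1) (m - 1) := by
  unfold ERel at *
  rw [map_sub, map_one, sub_mul, mul_sub, h1, one_mul, mul_one]

lemma ERel.det {g m} (h : ERel g m) : g.det = φ (d2 m) := by
  have h2 := congrArg Matrix.det h
  rw [Matrix.det_mul, Matrix.det_mul, mul_comm] at h2
  rw [P_det.mul_left_cancel h2, ← RingHom.map_det, Matrix.det_fin_two, d2]

lemma ERel.eq {g h m} (h1 : ERel g m) (h2 : ERel h m) : g = h := by
  have hP : IsUnit PMat := (Matrix.isUnit_iff_isUnit_det _).2 P_det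
  exact hP.mul_right_cancel (h1.trans h2.symm)

lemma ERel_A : ERel AMat AE := by
  unfold ERel AMat AE PMat mkE
  have := ω_sq
  ext i j
  fin_cases i <;> fin_cases j <;>
    simp [Matrix.mul_apply, Fin.sum_univ_two, φ_apply] <;> grind

lemma ERel_B : ERel BMat BE := by
  unfold ERel BMat BE PMat mkE
  have := ω_sq
  ext i j
  fin_cases i <;> fin_cases j <;>
    simp [Matrix.mul_apply, Fin.sum_univ_two, φ_apply] <;> grind

lemma rel_inv {x : GL (Fin 2) ℂ} {X m : Matrix (Fin 2) (Fin 2) Eis}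
    {y : GL (Fin 2) ℂ} (hx : ERel x X) (h3 : X * (X * X) = 1) (hy : ERel y m) :
    ERel ((x⁻¹ * y : GL (Fin 2) ℂ)) (X * (X * m)) := by
  have h : x * (x * x) = 1 := by
    apply Units.ext
    have := hx.mul (hx.mul hx)
    rw [h3] at this
    simpa using this.eq ERel.one
  have h' : x⁻¹ = x * x := inv_eq_of_mul_eq_one_right h
  rw [h', mul_assoc]
  exact hx.mul (hx.mul hy)

lemma exists_rel (t : G4) : ∃ m ∈ elts, ERel (mat t) m := by
  obtain ⟨g, hg⟩ := t
  change ∃ m ∈ elts, ERel (g : Matrix (Fin 2) (Fin 2) ℂ) m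
  unfold G4 at hg
  induction hg using Subgroup.closure_induction_left with
  | one => exact ⟨1, one_mem_elts, ERel.one⟩
  | mul_left x hx y hy ih =>
    obtain ⟨m, hm, hr⟩ := ih
    rcases hx with hx | hx
    · exact ⟨_, A_mem_elts m hm, ERel.mul (by rw [hx]; exact ERel_A) hr⟩
    · exact ⟨_, B_mem_elts m hm, ERel.mul (by rw [hx]; exact ERel_B) hr⟩
  | inv_mul_cancel x hx y hy ih =>
    obtain ⟨m, hm, hr⟩ := ih
    rcases hx with hx | hx
    · exact ⟨_, A_mem_elts _ (A_mem_elts m hm), rel_inv (by rw [hx]; exact ERel_A) A_cube hr⟩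
    · exact ⟨_, B_mem_elts _ (B_mem_elts m hm), rel_inv (by rw [hx]; exact ERel_B) B_cube hr⟩

lemma mat_inj {a b : G4} (h : mat a = mat b) : a = b := Subtype.ext (Units.ext h)

lemma mat_mul (a b : G4) : mat (a * b) = mat a * mat b := rfl

lemma mat_one : mat 1 = 1 := rfl

lemma braid {a b : G4} (ha : IsReflection a) (hb : IsReflection b)
    (hd : (mat a).det = ω ∨ (mat a).det = ω ^ 2) (hab : (mat b).det = (mat a).det)
    (hne : a ≠ b) : a * b * a = b * a * b := by
  obtain ⟨m, hm, hrm⟩ := exists_rel a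
  obtain ⟨n, hn, hrn⟩ := exists_rel b
  have e1 := ha.2
  have e2 := hb.2
  rw [hrm.sub_one.det, map_eq_zero_iff φ φ_inj] at e1
  rw [hrn.sub_one.det, map_eq_zero_iff φ φ_inj] at e2
  rw [hrm.det, hrn.det] at hab
  rw [hrm.det, ← φ_wE, ← map_pow, φ_inj.eq_iff, φ_inj.eq_iff] at hd
  have hmn : m ≠ n := by
    rintro rfl
    exact hne (mat_inj (hrm.eq hrn))
  have key := braid_elts m hm e1 hd n hn e2 (φ_inj hab) hmn
  apply mat_inj
  have h1 := (hrm.mul hrn).mul hrm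
  rw [key] at h1
  exact h1.eq ((hrn.mul hrm).mul hrn)

lemma move_iff {G : Type*} [Group G] (a b : G) (s : Fin 2 → G) :
    IsHurwitzMove ![a, b] s ↔ s = ![b, b⁻¹ * a * b] := by
  constructor
  · rintro ⟨i, h, h1, h2, -⟩
    obtain rfl : i = 0 := by omega
    ext j
    fin_cases j
    · exact h1
    · exact h2
  · rintro rfl
    exact ⟨0, by omega, rfl, rfl, fun j h0 h1 => by omega⟩

lemma orbit {G : Type*} [Group G] {a b c : G} (h1 : b⁻¹ * a * b = c) (h2 : c⁻¹ * b * c = a)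
    (h3 : a⁻¹ * c * a = b) (s : Fin 2 → G) :
    SameHurwitzOrbit ![a, b] s ↔ s = ![a, b] ∨ s = ![b, c] ∨ s = ![c, a] := by
  have m1 : IsHurwitzMove ![a, b] ![b, c] := by rw [move_iff, h1]
  have m2 : IsHurwitzMove ![b, c] ![c, a] := by rw [move_iff, h2]
  constructor
  · intro h
    have key : ∀ x y : Fin 2 → G, Relation.EqvGen IsHurwitzMove x y →
        ((x = ![a, b] ∨ x = ![b, c] ∨ x = ![c, a]) ↔
          (y = ![a, b] ∨ y = ![b, c] ∨ y = ![c, a])) := by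
      intro x y hxy
      induction hxy with
      | rel x y h =>
        obtain ⟨p, q, rfl⟩ : ∃ p q, x = ![p, q] := ⟨x 0, x 1, by ext i; fin_cases i <;> rfl⟩
        rw [move_iff] at h
        subst h
        have inj : ∀ u v u' v' : G, ![u, v] = ![u', v'] ↔ u = u' ∧ v = v' := by
          intros; simp
        simp only [inj]
        have cj : ∀ z w : G, z⁻¹ * p * z = z⁻¹ * w * z ↔ p = w := by
          intros; simp
        constructor
        · rintro (⟨rfl, rfl⟩ | ⟨rfl, rfl⟩ | ⟨rfl, rfl⟩)
          · exact Or.inr (Or.inl ⟨rfl, h1⟩)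
          · exact Or.inr (Or.inr ⟨rfl, h2⟩)
          · exact Or.inl ⟨rfl, h3⟩
        · rintro (⟨rfl, k⟩ | ⟨rfl, k⟩ | ⟨rfl, k⟩)
          · exact Or.inr (Or.inr ⟨(cj _ _).1 (k.trans h3.symm), rfl⟩)
          · exact Or.inl ⟨(cj _ _).1 (k.trans h1.symm), rfl⟩
          · exact Or.inr (Or.inl ⟨(cj _ _).1 (k.trans h2.symm), rfl⟩)
      | refl x => rfl
      | symm x y _ ih => exact ih.symm
      | trans x y z _ _ ih1 ih2 => exact ih1.trans ih2
    exact (key _ _ h).1 (Or.inl rfl)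
  · rintro (rfl | rfl | rfl)
    · exact .refl _
    · exact .rel _ _ m1
    · exact .trans _ _ _ (.rel _ _ m1) (.rel _ _ m2)

lemma mat_conj (a b : G4) (x : ℂ) :
    (mat (b⁻¹ * a * b) - x • 1).det = (mat a - x • 1).det := by
  have hb : mat b⁻¹ * mat b = 1 := by rw [← mat_mul, inv_mul_cancel, mat_one]
  have : mat (b⁻¹ * a * b) - x • 1 = mat b⁻¹ * (mat a - x • 1) * mat b := by
    rw [mat_mul, mat_mul, mul_sub, sub_mul, Matrix.mul_smul, Matrix.smul_mul, mul_one, hb]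
  have hd := congrArg Matrix.det hb
  rw [Matrix.det_mul, Matrix.det_one] at hd
  rw [this, Matrix.det_mul, Matrix.det_mul]
  linear_combination (mat a - x • 1).det * hd

lemma refl_conj {a b : G4} (ha : IsReflection a) : IsReflection (b⁻¹ * a * b) := by
  refine ⟨fun h => ha.1 ?_, ?_⟩
  · have := congrArg (fun z => b * z * b⁻¹) h
    simp only [mul_assoc, mul_inv_cancel_left, mul_inv_cancel, mul_one, one_mul] at this
    exact this
  · have := mat_conj a b 1
    rw [one_smul] at this
    rw [this, ha.2]

lemma det_conj (a b : G4) : (mat (b⁻¹ * a * b)).det = (mat a).det := by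
  simpa using mat_conj a b 0

theorem g4_same_class_pair_orbit (R : Set G4) (hR : R = R1 ∨ R = R2)
    (t₁ t₂ : G4) (h₁ : t₁ ∈ R) (h₂ : t₂ ∈ R) (hne : t₁ ≠ t₂) :
    {s : Fin 2 → G4 | SameHurwitzOrbit ![t₁, t₂] s}.ncard = 3 ∧
    {r : G4 | r ∈ R ∧ Appears r ![t₁, t₂]}.ncard = 3 := by
  have hb : t₁ * t₂ * t₁ = t₂ * t₁ * t₂ := by
    rcases hR with rfl | rfl
    · exact braid h₁.1 h₂.1 (Or.inl h₁.2) (h₂.2.trans h₁.2.symm) hne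
    · exact braid h₁.1 h₂.1 (Or.inr h₁.2) (h₂.2.trans h₁.2.symm) hne
  have hc : t₂⁻¹ * t₁ * t₂ ∈ R := by
    rcases hR with rfl | rfl
    · exact ⟨refl_conj h₁.1, (det_conj _ _).trans h₁.2⟩
    · exact ⟨refl_conj h₁.1, (det_conj _ _).trans h₁.2⟩
  generalize h1 : t₂⁻¹ * t₁ * t₂ = c at hc
  have e1 : t₁ * t₂ = t₂ * c := by rw [← h1]; group
  have e2 : t₂ * c = c * t₁ := by
    have : t₂ * (t₂ * c) = t₂ * (c * t₁) := by
      rw [← mul_assoc t₂ c t₁, ← e1, hb, mul_assoc]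
    exact mul_left_cancel this
  have h2 : c⁻¹ * t₂ * c = t₁ := by rw [mul_assoc, e2]; group
  have h3 : t₁⁻¹ * c * t₁ = t₂ := by rw [mul_assoc, ← e2, ← e1]; group
  have n1 : t₂ ≠ c := by
    rintro rfl
    exact hne (mul_right_cancel e1)
  have n2 : t₁ ≠ c := by
    rintro rfl
    exact hne (mul_right_cancel e2).symm
  have horb := orbit h1 h2 h3
  have i1 : ∀ u v u' v' : G4, ![u, v] = ![u', v'] ↔ u = u' ∧ v = v' := by
    intros; simp
  constructor
  · have : {s : Fin 2 → G4 | SameHurwitzOrbit ![t₁, t₂] s}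
        = {![t₁, t₂], ![t₂, c], ![c, t₁]} := by
      ext s
      simp only [Set.mem_setOf_eq, Set.mem_insert_iff, Set.mem_singleton_iff, horb]
    rw [this, Set.ncard_eq_three]
    refine ⟨_, _, _, ?_, ?_, ?_, rfl⟩
    · exact fun h => hne ((i1 _ _ _ _).1 h).1
    · exact fun h => n2 ((i1 _ _ _ _).1 h).1
    · exact fun h => n1 ((i1 _ _ _ _).1 h).1
  · have : {r : G4 | r ∈ R ∧ Appears r ![t₁, t₂]} = {t₁, t₂, c} := by
      ext r
      simp only [Set.mem_setOf_eq, Set.mem_insert_iff, Set.mem_singleton_iff, Appears, horb]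
      constructor
      · rintro ⟨-, s, (rfl | rfl | rfl), j, rfl⟩ <;> fin_cases j <;> simp
      · rintro (rfl | rfl | rfl)
        · exact ⟨h₁, _, Or.inl rfl, 0, rfl⟩
        · exact ⟨h₂, _, Or.inl rfl, 1, rfl⟩
        · exact ⟨hc, _, Or.inr (Or.inl rfl), 1, rfl⟩
    rw [this, Set.ncard_eq_three]
    exact ⟨_, _, _, hne, n2, n1, rfl⟩
end
end
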